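/- arXiv:1011.3654 — 8 statements merged into one kernel-verified Lean document; each statement's English description precedes it below -/
import Mathlib

section
/- For all d, d' ∈ ℕ^ℓ, the commutator of the deformed operators satisfies, as linear operators on K[X]: D_{q,d} ∘ D_{q,d'} − D_{q,d'} ∘ D_{q,d} = q·(|d| − |d'|)·D_{q,d+d'}. -/
open MvPolynomial

/-- The operator `∂_j^d = ∂_{1j}^{d 1} ⋯ ∂_{ℓj}^{d ℓ}` on `K[X]`,
`X` an `ℓ × n` matrix of variables. -/
noncomputable def pdj {K : Type*} [Field K] {ℓ n : ℕ} (d : Fin ℓ → ℕ) (j : Fin n) :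
    Module.End K (MvPolynomial (Fin ℓ × Fin n) K) :=
  ((List.finRange ℓ).map fun i =>
    ((pderiv (i, j)).toLinearMap : Module.End K (MvPolynomial (Fin ℓ × Fin n) K)) ^ d i).prod

/-- The deformed operator
`D_{q,d} = ∑_j (1 + q (x_{1j}∂_{1j} + ⋯ + x_{ℓj}∂_{ℓj})) ∘ ∂_j^d` on `K[X]`. -/
noncomputable def Dq {K : Type*} [Field K] (ℓ n : ℕ) (q : K) (d : Fin ℓ → ℕ) :
    Module.End K (MvPolynomial (Fin ℓ × Fin n) K) :=
  ∑ j : Fin n,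
    (1 + q • ∑ i : Fin ℓ,
        (LinearMap.mulLeft K (X (i, j)) * (pderiv (i, j)).toLinearMap)) * pdj d j

/-!
Moving `∂_j^d` past the Euler operator `E_k = ∑_i x_{ik} ∂_{ik}` of a column only costs a scalar:
`[∂_j^d, E_k] = δ_{jk} |d| ∂_j^d`. The `E_k` commute with each other, and so do the `∂_j^d`.
Hence the bracket of the `j`-th summand of `D_{q,d}` with the `k`-th summand of `D_{q,d'}`
vanishes for `j ≠ k`, and for `j = k` it is `q (|d| - |d'|)` times the `j`-th summand of
`D_{q,d+d'}`.
-/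

section AssociativeAlgebra

variable {R A : Type*} [CommRing R] [Ring A] [Algebra R A]

theorem lie_mul_of_lie_eq_smul {x y e : A} {a b : R} (hx : ⁅x, e⁆ = a • x) (hy : ⁅y, e⁆ = b • y) :
    ⁅x * y, e⁆ = (a + b) • (x * y) := by
  have leibniz : ⁅x * y, e⁆ = ⁅x, e⁆ * y + x * ⁅y, e⁆ := by
    simp only [Ring.lie_def]
    noncomm_ring
  rw [leibniz, hx, hy, smul_mul_assoc, mul_smul_comm, add_smul]

theorem lie_pow_of_lie_eq_smul {x e : A} {a : R} (hx : ⁅x, e⁆ = a • x) (m : ℕ) :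
    ⁅x ^ m, e⁆ = (m * a) • x ^ m := by
  induction m with
  | zero => simp [Ring.lie_def]
  | succ m ih => rw [pow_succ, lie_mul_of_lie_eq_smul ih hx, Nat.cast_succ, add_one_mul]

theorem lie_list_prod_of_lie_eq_smul {ι : Type*} {f : ι → A} {w : ι → R} {e : A}
    (hf : ∀ i, ⁅f i, e⁆ = w i • f i) (l : List ι) :
    ⁅(l.map f).prod, e⁆ = (l.map w).sum • (l.map f).prod := by
  induction l with
  | nil => simp [Ring.lie_def]
  | cons i l ih => simpa only [List.map_cons, List.prod_cons, List.sum_cons] using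
      lie_mul_of_lie_eq_smul (hf i) ih

theorem lie_one_add_smul (q : R) (x e : A) : ⁅x, 1 + q • e⁆ = q • ⁅x, e⁆ := by
  simp only [Ring.lie_def, mul_add, add_mul, mul_one, one_mul, mul_smul_comm, smul_mul_assoc,
    add_sub_add_left_eq_sub, smul_sub]

theorem lie_mul_mul_of_commute {f g x y : A} {a b : R} (hfg : Commute f g) (hxy : Commute x y)
    (hx : ⁅x, g⁆ = a • x) (hy : ⁅y, f⁆ = b • y) :
    ⁅f * x, g * y⁆ = a • (f * (x * y)) - b • (g * (x * y)) := by
  calc ⁅f * x, g * y⁆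
      = f * (⁅x, g⁆ * y) - g * (⁅y, f⁆ * x) + (f * g) * (x * y) - (g * f) * (y * x) := by
        simp only [Ring.lie_def]
        noncomm_ring
    _ = f * (⁅x, g⁆ * y) - g * (⁅y, f⁆ * x) := by
        rw [hfg.eq, hxy.eq, add_sub_cancel_right]
    _ = a • (f * (x * y)) - b • (g * (x * y)) := by
        rw [hx, hy, hxy.eq]
        simp only [smul_mul_assoc, mul_smul_comm, hxy.eq]

theorem lie_sum_mul_sum_mul {ι : Type*} [Fintype ι] [DecidableEq ι] {f x y : ι → A} {a b : R}
    (hf : ∀ j k, Commute (f j) (f k)) (hxy : ∀ j k, Commute (x j) (y k))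
    (hx : ∀ j k, ⁅x j, f k⁆ = (if j = k then a else 0) • x j)
    (hy : ∀ j k, ⁅y j, f k⁆ = (if j = k then b else 0) • y j) :
    ⁅∑ j, f j * x j, ∑ k, f k * y k⁆ = (a - b) • ∑ j, f j * (x j * y j) := by
  let _ : LieRing A := LieRing.ofAssociativeRing
  calc ⁅∑ j, f j * x j, ∑ k, f k * y k⁆
      = ∑ j, ∑ k, ⁅f j * x j, f k * y k⁆ := sum_lie_sum _ _ _ _
    _ = ∑ j, ∑ k, ((if j = k then a else 0) • (f j * (x j * y k))
          - (if k = j then b else 0) • (f k * (x j * y k))) :=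
        Finset.sum_congr rfl fun j _ => Finset.sum_congr rfl fun k _ =>
          lie_mul_mul_of_commute (hf j k) (hxy j k) (hx j k) (hy k j)
    _ = (a - b) • ∑ j, f j * (x j * y j) := by
        simp [Finset.sum_sub_distrib, Finset.smul_sum, sub_smul]

end AssociativeAlgebra

theorem list_prod_map_mul_of_commute {ι M : Type*} [Monoid M] {f g : ι → M}
    (h : ∀ i j, Commute (f i) (g j)) (l : List ι) :
    (l.map fun i => f i * g i).prod = (l.map f).prod * (l.map g).prod := by
  induction l with
  | nil => simp
  | cons i l ih =>
    have hcomm : Commute (g i) (l.map f).prod :=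
      Commute.list_prod_right _ _ (List.forall_mem_map.2 fun j _ => (h j i).symm)
    simp only [List.map_cons, List.prod_cons, ih, hcomm.mul_mul_mul_comm]

section WeightedEuler

variable {R σ : Type*} [CommRing R]

/-- The weighted Euler derivation `∑_s w_s x_s ∂_s` of a polynomial ring. It is encoded by its
values on the variables, so that infinitely many variables are allowed. -/
noncomputable def weightedEuler (w : σ → R) :
    Derivation R (MvPolynomial σ R) (MvPolynomial σ R) :=
  mkDerivation R fun s => w s • X s

@[simp]
theorem weightedEuler_X (w : σ → R) (s : σ) : weightedEuler w (X s) = w s • X s :=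
  mkDerivation_X R _ s

theorem lie_weightedEuler_weightedEuler (v w : σ → R) :
    ⁅weightedEuler v, weightedEuler w⁆ = 0 :=
  derivation_ext fun s => by simp [Derivation.commutator_apply, smul_comm (v s)]

theorem lie_pderiv_pderiv (s t : σ) :
    ⁅pderiv (R := R) s, pderiv (R := R) t⁆ = 0 := by
  classical
  exact derivation_ext fun u => by
    simp [Derivation.commutator_apply, Pi.single_apply, apply_ite]

theorem commute_pderiv (s t : σ) :
    Commute (pderiv (R := R) s).toLinearMap (pderiv t).toLinearMap := by
  rw [commute_iff_lie_eq]
  exact congrArg Derivation.toLinearMap (lie_pderiv_pderiv s t)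

theorem lie_pderiv_weightedEuler (s : σ) (w : σ → R) :
    ⁅pderiv (R := R) s, weightedEuler w⁆ = w s • pderiv s := by
  refine derivation_ext fun t => ?_
  obtain rfl | hts := eq_or_ne t s
  · simp [Derivation.commutator_apply]
  · simp [Derivation.commutator_apply, pderiv_X_of_ne hts]

end WeightedEuler

section ColumnEuler

variable {R ι κ : Type*} [CommRing R] [DecidableEq κ]

variable (R ι) in
/-- The Euler derivation `∑_i x_{ij} ∂_{ij}` of the `j`-th column of a matrix of variables: the
weighted Euler derivation whose weight is the indicator of that column. -/
noncomputable def columnEuler (j : κ) :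
    Derivation R (MvPolynomial (ι × κ) R) (MvPolynomial (ι × κ) R) :=
  weightedEuler fun s => if s.2 = j then 1 else 0

theorem sum_X_smul_pderiv_eq_columnEuler [Fintype ι] (j : κ) :
    ∑ i, (X (i, j) : MvPolynomial (ι × κ) R) • pderiv (i, j) = columnEuler R ι j := by
  classical
  refine derivation_ext fun ⟨i, k⟩ => ?_
  rw [← Derivation.coeFnAddMonoidHom_apply, map_sum, Finset.sum_apply]
  by_cases hkj : k = j <;> simp [columnEuler, Pi.single_apply, hkj]

theorem sum_mulLeft_X_mul_pderiv [Fintype ι] (j : κ) :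
    ∑ i, LinearMap.mulLeft R (X (i, j)) * (pderiv (i, j)).toLinearMap
      = (columnEuler R ι j).toLinearMap := by
  rw [← sum_X_smul_pderiv_eq_columnEuler]
  refine LinearMap.ext fun p => ?_
  rw [Derivation.coeFn_coe, ← Derivation.coeFnAddMonoidHom_apply, map_sum]
  simp

theorem commute_columnEuler (j k : κ) :
    Commute (columnEuler R ι j).toLinearMap (columnEuler R ι k).toLinearMap := by
  rw [commute_iff_lie_eq]
  exact congrArg Derivation.toLinearMap (lie_weightedEuler_weightedEuler _ _)

end ColumnEuler

section IteratedPartialDerivative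

variable {K : Type*} [Field K] {ℓ n : ℕ}

theorem commute_pdj (d d' : Fin ℓ → ℕ) (j k : Fin n) :
    Commute (pdj (K := K) d j) (pdj d' k) :=
  Commute.list_prod_left _ _ <| List.forall_mem_map.2 fun i _ =>
    Commute.list_prod_right _ _ <| List.forall_mem_map.2 fun i' _ =>
      (commute_pderiv (i, j) (i', k)).pow_pow (d i) (d' i')

theorem pdj_add (d d' : Fin ℓ → ℕ) (j : Fin n) :
    pdj (K := K) (d + d') j = pdj d j * pdj d' j := by
  simp only [pdj, Pi.add_apply, pow_add]
  exact list_prod_map_mul_of_commute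
    (fun i i' => (commute_pderiv (i, j) (i', j)).pow_pow (d i) (d' i')) _

theorem lie_pdj_columnEuler (d : Fin ℓ → ℕ) (j k : Fin n) :
    ⁅pdj (K := K) d j, (columnEuler K (Fin ℓ) k).toLinearMap⁆
      = (if j = k then ∑ i, (d i : K) else 0) • pdj d j := by
  have lie_pderiv (i : Fin ℓ) :
      ⁅(pderiv (i, j)).toLinearMap, (columnEuler K (Fin ℓ) k).toLinearMap⁆
        = (if j = k then 1 else 0 : K) • (pderiv (i, j)).toLinearMap :=
    congrArg Derivation.toLinearMap (lie_pderiv_weightedEuler (i, j) _)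
  have total_weight : ((List.finRange ℓ).map fun i => (d i : K) * if j = k then 1 else 0).sum
      = if j = k then ∑ i, (d i : K) else 0 := by
    rw [← List.ofFn_eq_map, List.sum_ofFn, ← Finset.sum_mul, mul_ite, mul_one, mul_zero]
  rw [← total_weight]
  exact lie_list_prod_of_lie_eq_smul (fun i => lie_pow_of_lie_eq_smul (lie_pderiv i) (d i)) _

end IteratedPartialDerivative

theorem Dq_eq_sum_columnEuler {K : Type*} [Field K] (ℓ n : ℕ) (q : K) (d : Fin ℓ → ℕ) :
    Dq ℓ n q d = ∑ j, (1 + q • (columnEuler K (Fin ℓ) j).toLinearMap) * pdj d j := by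
  simp only [Dq, sum_mulLeft_X_mul_pderiv]

theorem deformed_operators_commutator_general {K : Type*} [Field K] {ℓ n : ℕ} (q : K)
    (d d' : Fin ℓ → ℕ) :
    Dq ℓ n q d * Dq ℓ n q d' - Dq ℓ n q d' * Dq ℓ n q d
      = (q * ((∑ i, (d i : K)) - ∑ i, (d' i : K))) • Dq ℓ n q (d + d') := by
  have commute_factor (j k : Fin n) :
      Commute (1 + q • (columnEuler K (Fin ℓ) j).toLinearMap)
        (1 + q • (columnEuler K (Fin ℓ) k).toLinearMap) :=
    (Commute.one_left _).add_left
      ((Commute.one_right _).add_right (((commute_columnEuler j k).smul_left q).smul_right q))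
  have lie_factor (e : Fin ℓ → ℕ) (j k : Fin n) :
      ⁅pdj (K := K) e j, 1 + q • (columnEuler K (Fin ℓ) k).toLinearMap⁆
        = (if j = k then q * ∑ i, (e i : K) else 0) • pdj e j := by
    rw [lie_one_add_smul, lie_pdj_columnEuler, smul_smul, mul_ite, mul_zero]
  simp only [← Ring.lie_def, Dq_eq_sum_columnEuler, pdj_add, mul_sub]
  exact lie_sum_mul_sum_mul commute_factor (commute_pdj d d') (lie_factor d) (lie_factor d')

/-- The commutator relation
`[D_{q,d}, D_{q,d'}] = q (|d| - |d'|) D_{q, d+d'}`. -/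
theorem deformed_operators_commutator {K : Type*} [Field K] [CharZero K] {ℓ n : ℕ}
    (hℓ : 1 ≤ ℓ) (hn : 1 ≤ n) (q : K) (d d' : Fin ℓ → ℕ) :
    Dq ℓ n q d * Dq ℓ n q d' - Dq ℓ n q d' * Dq ℓ n q d
      = (q * ((∑ i, (d i : K)) - ∑ i, (d' i : K))) • Dq ℓ n q (d + d') :=
  deformed_operators_commutator_general q d d'
end

section
/- Let K₀ be a field of characteristic zero, K = K₀(q) the field of rational functions in an indeterminate q, and m ≥ 1 an integer. For every multidegree a ∈ ℕ^ℓ, the dimension over K of the space of polynomials in K[X] that are multihomogeneous of multidegree a (total degree a_i in the i-th set of variables, for each i) and diagonally (G(m,n),q)-harmonic is at most the dimension over K₀ of the space of polynomials in K₀[X] that are multihomogeneous of multidegree a and satisfy Σ_{j=1}^n ∂_j^d f = 0 for every d ∈ ℕ^ℓ with |d| a positive multiple of m (the classical diagonally G(m,n)-harmonic polynomials). -/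
open MvPolynomial

/-- The undeformed operator `D_d = ∑_j ∂_j^d`. -/
noncomputable def D0 {K : Type*} [Field K] (ℓ n : ℕ) (d : Fin ℓ → ℕ) :
    Module.End K (MvPolynomial (Fin ℓ × Fin n) K) :=
  ∑ j : Fin n, pdj d j

/-- The submodule of polynomials that are multihomogeneous of multidegree `a`
(total degree `a i` in the `i`-th set of variables) and diagonally `(G(m,n),q)`-harmonic. -/
noncomputable def qHarmonicHomogeneous {K : Type*} [Field K] (ℓ n : ℕ) (q : K) (m : ℕ)
    (a : Fin ℓ → ℕ) : Submodule K (MvPolynomial (Fin ℓ × Fin n) K) :=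
  weightedHomogeneousSubmodule K (fun v : Fin ℓ × Fin n => Pi.single v.1 1) a ⊓
    ⨅ d ∈ {d : Fin ℓ → ℕ | ∃ k : ℕ, 0 < k ∧ ∑ i, d i = m * k}, LinearMap.ker (Dq ℓ n q d)

/-- The submodule of polynomials that are multihomogeneous of multidegree `a`
and classically diagonally `G(m,n)`-harmonic. -/
noncomputable def classicalHarmonicHomogeneous {K : Type*} [Field K] (ℓ n : ℕ) (m : ℕ)
    (a : Fin ℓ → ℕ) : Submodule K (MvPolynomial (Fin ℓ × Fin n) K) :=
  weightedHomogeneousSubmodule K (fun v : Fin ℓ × Fin n => Pi.single v.1 1) a ⊓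
    ⨅ d ∈ {d : Fin ℓ → ℕ | ∃ k : ℕ, 0 < k ∧ ∑ i, d i = m * k}, LinearMap.ker (D0 ℓ n d)

/-!
The multihomogeneous `q`-harmonic polynomials of multidegree `a` are cut out of the
finite-dimensional space of polynomials of multidegree `a` by linear equations whose coefficients
in the monomial basis are polynomials in `q`. Such a system makes sense over any commutative ring
containing `q`. A minor of it that survives a specialization of `q` was already nonzero before, so
specializing can only lower the rank and enlarge the space of solutions.
-/

section Specialization

variable {R K k ι κ : Type*} [CommRing R] [Field K] [Field k] {φ : R →+* K}

theorem linearIndependent_iff_exists_det_ne_zero [Fintype ι] [DecidableEq ι] {v : ι → κ → K} :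
    LinearIndependent K v ↔ ∃ s : ι → κ, (Matrix.of fun i j => v i (s j)).det ≠ 0 := by
  constructor
  · intro hv
    obtain ⟨η, t, -, hspan, hindep⟩ := exists_linearIndependent' K (flip v)
    rw [span_flip_eq_top_iff_linearIndependent.mpr hv] at hspan
    let e : ι ≃ η := (Pi.basisFun K ι).indexEquiv (.mk hindep hspan.ge)
    refine ⟨t ∘ e, IsUnit.ne_zero ?_⟩
    rw [← Matrix.isUnit_iff_isUnit_det, ← Matrix.linearIndependent_cols_iff_isUnit]
    exact hindep.comp e e.injective
  · rintro ⟨s, hs⟩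
    exact .of_comp (LinearMap.funLeft K K s) (Matrix.linearIndependent_rows_of_det_ne_zero hs)

theorem linearIndependent_of_specialization [Finite ι] (hφ : Function.Injective φ) (ψ : R →+* k)
    {v : ι → κ → R} (hv : LinearIndependent k fun i => ψ ∘ v i) :
    LinearIndependent K fun i => φ ∘ v i := by
  classical
  have := Fintype.ofFinite ι
  rw [linearIndependent_iff_exists_det_ne_zero] at hv ⊢
  obtain ⟨s, hs⟩ := hv
  let M : Matrix ι ι R := Matrix.of fun i j => v i (s j)
  have hψM : ψ M.det ≠ 0 := by rwa [ψ.map_det]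
  have hφM : φ M.det ≠ 0 := (map_ne_zero_iff φ hφ).mpr fun h => hψM (by rw [h, map_zero])
  exact ⟨s, by rwa [φ.map_det] at hφM⟩

theorem finrank_span_le_of_specialization [Finite ι] (hφ : Function.Injective φ) (ψ : R →+* k)
    (v : ι → κ → R) :
    Module.finrank k (Submodule.span k (Set.range fun i => ψ ∘ v i)) ≤
      Module.finrank K (Submodule.span K (Set.range fun i => φ ∘ v i)) := by
  obtain ⟨η, s, hs, hspan, hindep⟩ := exists_linearIndependent' k fun i => ψ ∘ v i
  have := Finite.of_injective s hs
  have := Fintype.ofFinite η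
  have hindepK : LinearIndependent K fun j => φ ∘ v (s j) :=
    linearIndependent_of_specialization hφ ψ hindep
  calc Module.finrank k (Submodule.span k (Set.range fun i => ψ ∘ v i))
      = Fintype.card η := by rw [← hspan, finrank_span_eq_card hindep]
    _ = Module.finrank K (Submodule.span K (Set.range fun j => φ ∘ v (s j))) :=
        (finrank_span_eq_card hindepK).symm
    _ ≤ Module.finrank K (Submodule.span K (Set.range fun i => φ ∘ v i)) :=
        have := FiniteDimensional.span_of_finite K (Set.finite_range fun i => φ ∘ v i)
        Submodule.finrank_mono
          (Submodule.span_mono (Set.range_comp_subset_range s fun i => φ ∘ v i))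

theorem finrank_span_add_finrank_ker {V W : Type*} [AddCommGroup V] [Module K V] [AddCommGroup W]
    [Module K W] [Finite ι] (b : Module.Basis ι K V) {T : V →ₗ[K] W} {w : ι → W}
    (hT : ∀ i, T (b i) = w i) :
    Module.finrank K (Submodule.span K (Set.range w)) + Module.finrank K (LinearMap.ker T) =
      Nat.card ι := by
  have := Module.Finite.of_basis b
  rw [← funext hT, Set.range_comp' T b, ← Submodule.map_span, b.span_eq, ← LinearMap.range_eq_map,
    T.finrank_range_add_finrank_ker, Module.finrank_eq_nat_card_basis b]

theorem finrank_ker_le_of_specialization {V W : Type*} [AddCommGroup V] [Module K V]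
    [AddCommGroup W] [Module k W] [Finite ι] (hφ : Function.Injective φ) (ψ : R →+* k)
    (v : ι → κ → R) (b : Module.Basis ι K V) (c : Module.Basis ι k W)
    {T : V →ₗ[K] κ → K} {S : W →ₗ[k] κ → k}
    (hT : ∀ i, T (b i) = φ ∘ v i) (hS : ∀ i, S (c i) = ψ ∘ v i) :
    Module.finrank K (LinearMap.ker T) ≤ Module.finrank k (LinearMap.ker S) := by
  have hrank := finrank_span_le_of_specialization hφ ψ v
  have hnullT := finrank_span_add_finrank_ker b hT
  have hnullS := finrank_span_add_finrank_ker c hS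
  lia

end Specialization

section PolynomialOperators

variable {R S σ τ η : Type*} [CommSemiring R] [CommSemiring S]

/-- All the coefficients of all the polynomials `T d f`, as one linear map in `f`: the system of
linear equations in the coefficients of `f` which expresses that every `T d` annihilates `f`. -/
noncomputable def coeffSystem (T : η → MvPolynomial σ R →ₗ[R] MvPolynomial τ R) :
    MvPolynomial σ R →ₗ[R] η × (τ →₀ ℕ) → R :=
  LinearMap.pi fun p => lcoeff R p.2 ∘ₗ T p.1

theorem coeffSystem_apply (T : η → MvPolynomial σ R →ₗ[R] MvPolynomial τ R)
    (f : MvPolynomial σ R) (p : η × (τ →₀ ℕ)) : coeffSystem T f p = coeff p.2 (T p.1 f) :=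
  rfl

theorem ker_coeffSystem (T : η → MvPolynomial σ R →ₗ[R] MvPolynomial τ R) :
    LinearMap.ker (coeffSystem T) = ⨅ d, LinearMap.ker (T d) := by
  ext f
  simp only [LinearMap.mem_ker, Submodule.mem_iInf, funext_iff, coeffSystem_apply, Prod.forall,
    MvPolynomial.ext_iff, Pi.zero_apply, coeff_zero]

theorem coeffSystem_map {φ : R →+* S} {T : η → MvPolynomial σ R →ₗ[R] MvPolynomial τ R}
    {T' : η → MvPolynomial σ S →ₗ[S] MvPolynomial τ S}
    (hT : ∀ d f, T' d (map φ f) = map φ (T d f)) (f : MvPolynomial σ R) :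
    coeffSystem T' (map φ f) = φ ∘ coeffSystem T f := by
  ext p
  simp only [coeffSystem_apply, Function.comp_apply, hT, coeff_map]

theorem coe_basisRestrictSupport_apply (s : Set (σ →₀ ℕ)) (e : s) :
    (basisRestrictSupport R s e : MvPolynomial σ R) = monomial (e : σ →₀ ℕ) 1 := by
  classical
  have hbasis : basisRestrictSupport R s e =
      ⟨monomial (e : σ →₀ ℕ) 1, (monomial_mem_restrictSupport R).mpr (.inl e.2)⟩ := by
    rw [Module.Basis.apply_eq_iff]
    ext e'
    change coeff (e' : σ →₀ ℕ) (monomial (e : σ →₀ ℕ) 1) = Finsupp.single e 1 e'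
    rw [coeff_monomial, Finsupp.single_apply]
    simp only [Subtype.ext_iff]
  rw [hbasis]

theorem finrank_inf_ker {K V W : Type*} [Field K] [AddCommGroup V] [Module K V] [AddCommGroup W]
    [Module K W] (U : Submodule K V) (T : V →ₗ[K] W) :
    Module.finrank K ↥(U ⊓ LinearMap.ker T) =
      Module.finrank K (LinearMap.ker (T.domRestrict U)) := by
  rw [LinearMap.ker_domRestrict, ← Submodule.map_comap_subtype, Submodule.finrank_map_subtype_eq]

theorem finrank_restrictSupport_inf_iInf_ker_le_of_specialization {R K k : Type*} [CommRing R]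
    [Field K] [Field k] {φ : R →+* K} (hφ : Function.Injective φ) (ψ : R →+* k)
    {s : Set (σ →₀ ℕ)} (hs : s.Finite)
    {TR : η → MvPolynomial σ R →ₗ[R] MvPolynomial τ R}
    {TK : η → MvPolynomial σ K →ₗ[K] MvPolynomial τ K}
    {Tk : η → MvPolynomial σ k →ₗ[k] MvPolynomial τ k}
    (hTK : ∀ d f, TK d (map φ f) = map φ (TR d f))
    (hTk : ∀ d f, Tk d (map ψ f) = map ψ (TR d f)) :
    Module.finrank K ↥(restrictSupport K s ⊓ ⨅ d, LinearMap.ker (TK d)) ≤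
      Module.finrank k ↥(restrictSupport k s ⊓ ⨅ d, LinearMap.ker (Tk d)) := by
  have := hs.to_subtype
  rw [← ker_coeffSystem, ← ker_coeffSystem, finrank_inf_ker, finrank_inf_ker]
  refine finrank_ker_le_of_specialization hφ ψ (fun e : s => coeffSystem TR (monomial e 1))
    (basisRestrictSupport K s) (basisRestrictSupport k s) (fun e => ?_) fun e => ?_
  · rw [LinearMap.domRestrict_apply, coe_basisRestrictSupport_apply, ← coeffSystem_map hTK,
      map_monomial, φ.map_one]
  · rw [LinearMap.domRestrict_apply, coe_basisRestrictSupport_apply, ← coeffSystem_map hTk,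
      map_monomial, ψ.map_one]

end PolynomialOperators

section DeformedOperators

variable {R S : Type*} [CommSemiring R] [CommSemiring S] {ℓ n : ℕ}

/-- The operator `∂_j^d` over a commutative semiring; over a field it is `pdj d j`. -/
noncomputable def columnPDeriv (R : Type*) [CommSemiring R] (d : Fin ℓ → ℕ) (j : Fin n) :
    Module.End R (MvPolynomial (Fin ℓ × Fin n) R) :=
  ((List.finRange ℓ).map fun i =>
    ((pderiv (i, j)).toLinearMap : Module.End R (MvPolynomial (Fin ℓ × Fin n) R)) ^ d i).prod

/-- The deformed operator `D_{q,d}` over a commutative semiring; over a field it is `Dq ℓ n q d`.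
The polynomial ring `K₀[q]`, over which the deformation parameter can be specialized, is the
case of interest. -/
noncomputable def deformedOperator (ℓ n : ℕ) (q : R) (d : Fin ℓ → ℕ) :
    Module.End R (MvPolynomial (Fin ℓ × Fin n) R) :=
  ∑ j : Fin n,
    (1 + q • ∑ i : Fin ℓ,
        (LinearMap.mulLeft R (X (i, j)) * (pderiv (i, j)).toLinearMap)) * columnPDeriv R d j

theorem columnPDeriv_map (φ : R →+* S) (d : Fin ℓ → ℕ) (j : Fin n)
    (f : MvPolynomial (Fin ℓ × Fin n) R) :
    columnPDeriv S d j (map φ f) = map φ (columnPDeriv R d j f) := by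
  have hpow (i : Fin ℓ) (g : MvPolynomial (Fin ℓ × Fin n) R) :
      ((pderiv (i, j)).toLinearMap ^ d i : Module.End S _) (map φ g) =
        map φ (((pderiv (i, j)).toLinearMap ^ d i : Module.End R _) g) := by
    rw [Module.End.pow_apply, Module.End.pow_apply]
    exact ((Function.Semiconj.iterate_right (fun _ => pderiv_map.symm) (d i)).eq g).symm
  unfold columnPDeriv
  induction List.finRange ℓ with
  | nil => rfl
  | cons i L ih =>
    rw [List.map_cons, List.map_cons, List.prod_cons, List.prod_cons, Module.End.mul_apply,
      Module.End.mul_apply, ih, hpow]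

theorem deformedOperator_map (φ : R →+* S) (q : R) (d : Fin ℓ → ℕ)
    (f : MvPolynomial (Fin ℓ × Fin n) R) :
    deformedOperator ℓ n (φ q) d (map φ f) = map φ (deformedOperator ℓ n q d f) := by
  simp only [deformedOperator, LinearMap.sum_apply, Module.End.mul_apply, columnPDeriv_map,
    LinearMap.add_apply, LinearMap.smul_apply, map_sum, map_add, Module.End.one_apply,
    LinearMap.mulLeft_apply, Derivation.coeFn_coe, pderiv_map, smul_eq_C_mul, map_mul, map_X,
    map_C]

end DeformedOperators

section Harmonic

variable {K : Type*} [Field K] {ℓ n : ℕ}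

/-- The exponents of the monomials of multidegree `a`. -/
def multidegreeExponents (n : ℕ) (a : Fin ℓ → ℕ) : Set (Fin ℓ × Fin n →₀ ℕ) :=
  {e | Finsupp.weight (fun v : Fin ℓ × Fin n => (Pi.single v.1 1 : Fin ℓ → ℕ)) e = a}

theorem finite_multidegreeExponents (n : ℕ) (a : Fin ℓ → ℕ) :
    (multidegreeExponents n a).Finite := by
  refine (Finsupp.finite_of_degree_eq (∑ i, a i)).subset fun e he => ?_
  calc e.degree = ∑ i, Finsupp.weight (fun v => (Pi.single v.1 1 : Fin ℓ → ℕ)) e i := by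
        simp only [Finsupp.degree_eq_sum, Finsupp.weight_eq_sum, Finset.sum_apply, Pi.smul_apply]
        rw [Finset.sum_comm]
        simp [Pi.single_apply]
    _ = ∑ i, a i := by rw [he.out]

theorem qHarmonicHomogeneous_eq (q : K) (m : ℕ) (a : Fin ℓ → ℕ) :
    qHarmonicHomogeneous ℓ n q m a = restrictSupport K (multidegreeExponents n a) ⊓
      ⨅ d : {d : Fin ℓ → ℕ | ∃ k : ℕ, 0 < k ∧ ∑ i, d i = m * k},
        LinearMap.ker (deformedOperator ℓ n q d) := by
  rw [qHarmonicHomogeneous, weightedHomogeneousSubmodule_eq_finsupp_supported, iInf_subtype']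
  rfl

theorem qHarmonicHomogeneous_zero (m : ℕ) (a : Fin ℓ → ℕ) :
    qHarmonicHomogeneous ℓ n (0 : K) m a = classicalHarmonicHomogeneous ℓ n m a := by
  have hD (d : Fin ℓ → ℕ) : Dq ℓ n (0 : K) d = D0 ℓ n d := by
    simp only [Dq, D0, zero_smul, add_zero, one_mul]
  simp only [qHarmonicHomogeneous, classicalHarmonicHomogeneous, hD]

instance finite_qHarmonicHomogeneous (q : K) (m : ℕ) (a : Fin ℓ → ℕ) :
    Module.Finite K (qHarmonicHomogeneous ℓ n q m a) := by
  have := (finite_multidegreeExponents n a).to_subtype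
  have := Module.Finite.of_basis (basisRestrictSupport K (multidegreeExponents n a))
  rw [qHarmonicHomogeneous_eq]
  exact Submodule.finiteDimensional_inf_left _ _

universe u v

theorem qHarmonic_dimension_le_general {R : Type*} {K : Type u} {k : Type v} [CommRing R] [Field K]
    [Field k] {φ : R →+* K} (hφ : Function.Injective φ) (ψ : R →+* k) (q : R) (m : ℕ)
    (a : Fin ℓ → ℕ) :
    Cardinal.lift.{v} (Module.rank K (qHarmonicHomogeneous ℓ n (φ q) m a)) ≤
      Cardinal.lift.{u} (Module.rank k (qHarmonicHomogeneous ℓ n (ψ q) m a)) := by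
  rw [← Module.finrank_eq_rank, ← Module.finrank_eq_rank, Cardinal.lift_natCast,
    Cardinal.lift_natCast, Nat.cast_le, qHarmonicHomogeneous_eq, qHarmonicHomogeneous_eq]
  refine finrank_restrictSupport_inf_iInf_ker_le_of_specialization hφ ψ
    (finite_multidegreeExponents n a) (TR := fun d => deformedOperator ℓ n q d.1) ?_ ?_
  · exact fun d f => deformedOperator_map φ q d.1 f
  · exact fun d f => deformedOperator_map ψ q d.1 f

end Harmonic

/-- Specialization bound: over `K = K₀(q)` with `q` the indeterminate, the dimension of the
multihomogeneous component of multidegree `a` of the diagonally `(G(m,n),q)`-harmonic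
polynomials is at most the dimension of the corresponding component of the classical
diagonally `G(m,n)`-harmonic polynomials over `K₀`. -/
theorem qHarmonic_dimension_le {K₀ : Type*} [Field K₀] [CharZero K₀] {ℓ n : ℕ}
    (hℓ : 1 ≤ ℓ) (hn : 1 ≤ n) (m : ℕ) (hm : 1 ≤ m) (a : Fin ℓ → ℕ) :
    Module.rank (RatFunc K₀)
        (qHarmonicHomogeneous (K := RatFunc K₀) ℓ n RatFunc.X m a)
      ≤ Module.rank K₀ (classicalHarmonicHomogeneous (K := K₀) ℓ n m a) := by
  have hle := qHarmonic_dimension_le_general (ℓ := ℓ) (n := n) (RatFunc.algebraMap_injective K₀)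
    (Polynomial.evalRingHom 0) Polynomial.X m a
  rwa [RatFunc.algebraMap_X, Polynomial.coe_evalRingHom, Polynomial.eval_X, Cardinal.lift_id,
    Cardinal.lift_id, qHarmonicHomogeneous_zero] at hle
end

section
/- Let ε := ∂_{x_1}∂_{x_2}⋯∂_{x_n} be the product of all partial derivative operators on K[x_1,…,x_n]. Then for every k ∈ ℕ and every f ∈ K[x_1,…,x_n], ε(D_{q,k} f) = Σ_{j=1}^n ((1+q) + q·x_j∂_{x_j}) ∂_{x_j}^k (ε f). Equivalently, ε ∘ D_{q,k} = (1+q)·D_{q/(1+q),k} ∘ ε whenever q ≠ −1. -/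
open MvPolynomial

/-- The deformed operator `D_{q,k} = ∑_j (1 + q x_j ∂_j) ∘ ∂_j^k` on `K[x_1,…,x_n]`. -/
noncomputable def Dq1 {K : Type*} [Field K] (n : ℕ) (q : K) (k : ℕ) :
    Module.End K (MvPolynomial (Fin n) K) :=
  ∑ j : Fin n,
    (1 + q • (LinearMap.mulLeft K (X j) * (pderiv j).toLinearMap)) *
      ((pderiv j).toLinearMap : Module.End K (MvPolynomial (Fin n) K)) ^ k

/-- The operator `ε = ∂_1 ∂_2 ⋯ ∂_n`. -/
noncomputable def epsOp {K : Type*} [Field K] (n : ℕ) :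
    Module.End K (MvPolynomial (Fin n) K) :=
  ((List.finRange n).map fun j =>
    ((pderiv j).toLinearMap : Module.End K (MvPolynomial (Fin n) K))).prod

/-!
Write `θ_j = x_j ∂_j`. The Weyl relation `∂_j x_j = x_j ∂_j + 1` gives `∂_i θ_j = (θ_j + δ_ij) ∂_i`.
Since `∂_j` occurs exactly once in `ε`, moving `ε` past `θ_j` replaces `θ_j` by `θ_j + 1`, hence
`1 + q θ_j` by `(1 + q) + q θ_j`, while `ε` commutes with `∂_j ^ k`.
-/

section PDerivOperators

variable {R σ : Type*} [CommSemiring R]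

theorem commute_pderiv_s6 (i j : σ) :
    Commute ((pderiv i).toLinearMap : Module.End R (MvPolynomial σ R))
      (pderiv j).toLinearMap := by
  refine LinearMap.ext fun p => MvPolynomial.ext _ _ fun m => ?_
  obtain rfl | hij := eq_or_ne i j
  · rfl
  · simp only [Module.End.mul_apply, Derivation.coeFn_coe, coeff_pderiv, Finsupp.add_apply,
      Finsupp.single_eq_of_ne hij, Finsupp.single_eq_of_ne' hij, add_zero]
    rw [add_right_comm m, mul_right_comm]

/-- The Euler operator `θ_j = x_j ∂_j` in the single variable `x_j`, in terms of which
`D_{q,k} = ∑_j (1 + q θ_j) ∂_j^k`. -/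
noncomputable def eulerOp (R : Type*) {σ : Type*} [CommSemiring R] (j : σ) :
    Module.End R (MvPolynomial σ R) :=
  LinearMap.mulLeft R (X j) * (pderiv j).toLinearMap

theorem eulerOp_apply (j : σ) (f : MvPolynomial σ R) : eulerOp R j f = X j * pderiv j f :=
  rfl

theorem semiconjBy_pderiv_eulerOp_self (j : σ) :
    SemiconjBy (pderiv j).toLinearMap (eulerOp R j) (eulerOp R j + 1) := by
  refine LinearMap.ext fun f => ?_
  simp [eulerOp_apply, add_comm]

theorem commute_pderiv_eulerOp {i j : σ} (hij : i ≠ j) :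
    Commute (pderiv i).toLinearMap (eulerOp R j) := by
  refine LinearMap.ext fun f => ?_
  have pderiv_pderiv : pderiv i (pderiv j f) = pderiv j (pderiv i f) :=
    LinearMap.congr_fun (commute_pderiv_s6 i j) f
  simp [eulerOp_apply, pderiv_X_of_ne hij.symm, pderiv_pderiv]

theorem semiconjBy_list_prod_pderiv_eulerOp [DecidableEq σ] (l : List σ) (j : σ) :
    SemiconjBy (l.map fun i => ((pderiv i).toLinearMap : Module.End R (MvPolynomial σ R))).prod
      (eulerOp R j) (eulerOp R j + l.count j) := by
  induction l with
  | nil => simp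
  | cons i l ih =>
    rw [List.map_cons, List.prod_cons]
    refine SemiconjBy.mul_left ?_ ih
    have count_right := Nat.commute_cast
      ((pderiv i).toLinearMap : Module.End R (MvPolynomial σ R)) (l.count j)
    obtain rfl | hij := eq_or_ne i j
    · rw [List.count_cons_self, Nat.cast_succ, ← add_assoc, add_right_comm]
      exact (semiconjBy_pderiv_eulerOp_self i).add_right count_right
    · rw [List.count_cons_of_ne hij]
      exact (commute_pderiv_eulerOp hij).add_right count_right

end PDerivOperators

section Epsilon

variable {K : Type*} [Field K] {n : ℕ}

theorem commute_epsOp_pderiv (j : Fin n) :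
    Commute (epsOp n) ((pderiv j).toLinearMap : Module.End K (MvPolynomial (Fin n) K)) :=
  Commute.list_prod_left _ _ <| List.forall_mem_map.mpr fun i _ => commute_pderiv_s6 i j

theorem semiconjBy_epsOp_eulerOp (j : Fin n) :
    SemiconjBy (epsOp n) (eulerOp K j) (eulerOp K j + 1) := by
  simpa only [epsOp, List.count_eq_one_of_mem (List.nodup_finRange n) (List.mem_finRange j),
    Nat.cast_one] using semiconjBy_list_prod_pderiv_eulerOp (R := K) (List.finRange n) j

theorem semiconjBy_epsOp_one_add_smul_eulerOp (q : K) (j : Fin n) :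
    SemiconjBy (epsOp n) (1 + q • eulerOp K j) ((1 + q) • 1 + q • eulerOp K j) := by
  have shift : (1 + q) • 1 + q • eulerOp K j = 1 + q • (eulerOp K j + 1) := by module
  rw [shift]
  exact (SemiconjBy.one_right _).add_right ((semiconjBy_epsOp_eulerOp j).smul_right q)

theorem epsOp_mul_Dq1 (q : K) (k : ℕ) :
    epsOp n * Dq1 n q k =
      (∑ j : Fin n, ((1 + q) • 1 + q • eulerOp K j) * (pderiv j).toLinearMap ^ k) * epsOp n := by
  rw [Dq1, Finset.mul_sum, Finset.sum_mul]
  exact Finset.sum_congr rfl fun j _ =>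
    (semiconjBy_epsOp_one_add_smul_eulerOp q j).mul_right ((commute_epsOp_pderiv j).pow_right k)

theorem one_add_smul_Dq1_div {q : K} (hq : q ≠ -1) (k : ℕ) :
    (1 + q) • Dq1 n (q / (1 + q)) k =
      ∑ j : Fin n, ((1 + q) • 1 + q • eulerOp K j) * (pderiv j).toLinearMap ^ k := by
  have one_add_ne_zero : 1 + q ≠ 0 := fun h => hq (eq_neg_of_add_eq_zero_right h)
  rw [Dq1, Finset.smul_sum]
  refine Finset.sum_congr rfl fun j _ => ?_
  rw [← smul_mul_assoc, smul_add, smul_smul, mul_div_cancel₀ q one_add_ne_zero, eulerOp]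

end Epsilon

theorem eps_comm_Dq_general {K : Type*} [Field K] {n : ℕ} (q : K) :
    (∀ (k : ℕ) (f : MvPolynomial (Fin n) K),
      epsOp n (Dq1 n q k f)
        = ∑ j : Fin n,
            ((1 + q) • ((((pderiv j).toLinearMap :
                  Module.End K (MvPolynomial (Fin n) K)) ^ k) (epsOp n f))
              + q • (X j * pderiv j ((((pderiv j).toLinearMap :
                  Module.End K (MvPolynomial (Fin n) K)) ^ k) (epsOp n f)))))
    ∧ (q ≠ -1 → ∀ k : ℕ,
        epsOp n * Dq1 n q k = (1 + q) • (Dq1 n (q / (1 + q)) k * epsOp n)) := by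
  refine ⟨fun k f => ?_, fun hq k => ?_⟩
  · have apply_eq := LinearMap.congr_fun (epsOp_mul_Dq1 q k) f
    simpa only [Module.End.mul_apply, LinearMap.sum_apply, LinearMap.add_apply,
      LinearMap.smul_apply, Module.End.one_apply, eulerOp_apply] using apply_eq
  · rw [epsOp_mul_Dq1, ← one_add_smul_Dq1_div hq, smul_mul_assoc]

/-- Commutation of `ε` with the deformed operators:
`ε ∘ D_{q,k} = ∑_j ((1+q) + q x_j∂_j) ∂_j^k ∘ ε`, i.e.
`ε ∘ D_{q,k} = (1+q) D_{q/(1+q),k} ∘ ε` when `q ≠ -1`. -/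
theorem eps_comm_Dq {K : Type*} [Field K] [CharZero K] {n : ℕ} (hn : 1 ≤ n) (q : K) :
    (∀ (k : ℕ) (f : MvPolynomial (Fin n) K),
      epsOp n (Dq1 n q k f)
        = ∑ j : Fin n,
            ((1 + q) • ((((pderiv j).toLinearMap :
                  Module.End K (MvPolynomial (Fin n) K)) ^ k) (epsOp n f))
              + q • (X j * pderiv j ((((pderiv j).toLinearMap :
                  Module.End K (MvPolynomial (Fin n) K)) ^ k) (epsOp n f)))))
    ∧ (q ≠ -1 → ∀ k : ℕ,
        epsOp n * Dq1 n q k = (1 + q) • (Dq1 n (q / (1 + q)) k * epsOp n)) :=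
  eps_comm_Dq_general q
end

section
/- Let r ≥ 1 be an integer and let φ̄_r : K[x_1,…,x_n] → K[x_1,…,x_n] be the linear map sending each monomial x^a = x_1^{a_1}⋯x_n^{a_n} (a ∈ ℕ^n) to (a_1!⋯a_n!/((ra_1)!⋯(ra_n)!))·x^{ra}, i.e., sending the divided-power monomial x^{(a)} := x^a/(a_1!⋯a_n!) to x^{(ra)}. Then for every k ∈ ℕ and every f ∈ K[x_1,…,x_n], Σ_{j=1}^n (r + q·x_j∂_{x_j}) ∂_{x_j}^{rk} (φ̄_r f) = r·φ̄_r(D_{q,k} f). Equivalently, D_{q/r, rk} ∘ φ̄_r = φ̄_r ∘ D_{q,k}. -/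
open MvPolynomial

/-!
In the basis of divided-power monomials `x^{(a)} = x^a / a!`, the derivation `∂_j` is the shift
`x^{(a + e_j)} ↦ x^{(a)}` and `x_j ∂_j` is diagonal with eigenvalue `a_j`. Replacing `a` by `r a`
turns one shift into `r` shifts and multiplies the eigenvalue by `r`, so the inflation `φ`
satisfies `∂_j^r φ = φ ∂_j` and `x_j ∂_j φ = r φ x_j ∂_j`; hence
`(1 + (q/r) x_j ∂_j) ∂_j^{rk} φ = φ (1 + q x_j ∂_j) ∂_j^k`.
-/

theorem prod_factorial_ne_zero {σ : Type*} (a : σ →₀ ℕ) : (a.prod fun _ => Nat.factorial) ≠ 0 :=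
  Finset.prod_ne_zero_iff.2 fun i _ => (a i).factorial_ne_zero

theorem prod_factorial_add_single_one {σ : Type*} (a : σ →₀ ℕ) (j : σ) :
    ((a + Finsupp.single j 1).prod fun _ => Nat.factorial) =
      (a j + 1) * a.prod fun _ => Nat.factorial := by
  have factor_at (b : σ →₀ ℕ) : (b.prod fun _ => Nat.factorial) =
      (b j).factorial * (b.erase j).prod fun _ => Nat.factorial :=
    (Finsupp.mul_prod_erase' b j _ fun _ => Nat.factorial_zero).symm
  rw [factor_at, factor_at a, Finsupp.erase_add, Finsupp.erase_single, add_zero,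
    Finsupp.add_apply, Finsupp.single_eq_same, Nat.factorial_succ, mul_assoc]

section DividedPowerMonomial

variable {σ K : Type*} [Semifield K]

/-- The divided-power monomial `x^{(a)} = x^a / ∏ i, (a i)!`. -/
noncomputable def dividedPowerMonomial (a : σ →₀ ℕ) : MvPolynomial σ K :=
  monomial a ((a.prod fun _ => Nat.factorial : ℕ) : K)⁻¹

theorem X_mul_pderiv_dividedPowerMonomial (j : σ) (a : σ →₀ ℕ) :
    X j * pderiv j (dividedPowerMonomial a : MvPolynomial σ K) =
      (a j : K) • dividedPowerMonomial a := by
  rw [dividedPowerMonomial, X_mul_pderiv_monomial, Nat.cast_smul_eq_nsmul]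

theorem pderiv_dividedPowerMonomial_of_eq_zero {j : σ} {a : σ →₀ ℕ} (ha : a j = 0) :
    pderiv j (dividedPowerMonomial a : MvPolynomial σ K) = 0 := by
  simp [dividedPowerMonomial, ha]

variable [CharZero K]

theorem pderiv_dividedPowerMonomial_add_single (j : σ) (a : σ →₀ ℕ) :
    pderiv j (dividedPowerMonomial (a + Finsupp.single j 1) : MvPolynomial σ K) =
      dividedPowerMonomial a := by
  have ha : ((a j + 1 : ℕ) : K) ≠ 0 := Nat.cast_ne_zero.2 (a j).succ_ne_zero
  rw [dividedPowerMonomial, pderiv_monomial, add_tsub_cancel_right,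
    prod_factorial_add_single_one, Finsupp.add_apply, Finsupp.single_eq_same, Nat.cast_mul,
    mul_comm, mul_inv, mul_inv_cancel_left₀ ha, dividedPowerMonomial]

theorem pderiv_pow_dividedPowerMonomial_add_single (j : σ) (a : σ →₀ ℕ) (m : ℕ) :
    ((pderiv j).toLinearMap ^ m : Module.End K (MvPolynomial σ K))
      (dividedPowerMonomial (a + Finsupp.single j m)) = dividedPowerMonomial a := by
  induction m with
  | zero => simp
  | succ m ih =>
    rw [pow_succ, Module.End.mul_apply, Finsupp.single_add, ← add_assoc, Derivation.coeFn_coe,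
      pderiv_dividedPowerMonomial_add_single, ih]

theorem prod_factorial_smul_dividedPowerMonomial (a : σ →₀ ℕ) :
    ((a.prod fun _ => Nat.factorial : ℕ) : K) • (dividedPowerMonomial a : MvPolynomial σ K) =
      monomial a 1 := by
  rw [dividedPowerMonomial, smul_monomial, smul_eq_mul,
    mul_inv_cancel₀ (Nat.cast_ne_zero.2 (prod_factorial_ne_zero a))]

theorem linearMap_ext_dividedPowerMonomial {M : Type*} [AddCommMonoid M] [Module K M]
    {f g : MvPolynomial σ K →ₗ[K] M}
    (h : ∀ a, f (dividedPowerMonomial a) = g (dividedPowerMonomial a)) : f = g := by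
  refine (basisMonomials σ K).ext fun a => ?_
  simp only [coe_basisMonomials, ← prod_factorial_smul_dividedPowerMonomial, map_smul, h]

end DividedPowerMonomial

/-- `φ` is the inflation by `r`, i.e. `φ x^{(a)} = x^{(r a)}` for all `a`. A predicate rather than
a definition of the map, so that it applies to any `φ` given by its values on monomials. -/
def IsInflation {σ K : Type*} [Semifield K] (r : ℕ) (φ : Module.End K (MvPolynomial σ K)) :
    Prop :=
  ∀ a, φ (dividedPowerMonomial a) = dividedPowerMonomial (r • a)

namespace IsInflation

variable {σ K : Type*} [Semifield K] [CharZero K] {r : ℕ}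
  {φ : Module.End K (MvPolynomial σ K)}

theorem of_apply_monomial [Fintype σ]
    (hφ : ∀ a : σ →₀ ℕ, φ (monomial a 1) =
      (((∏ i, (a i).factorial : ℕ) : K) / ((∏ i, (r * a i).factorial : ℕ) : K)) •
        monomial (r • a) 1) :
    IsInflation r φ := by
  intro a
  have prod_eq (b : σ →₀ ℕ) : ∏ i, (b i).factorial = b.prod fun _ => Nat.factorial :=
    (Finsupp.prod_fintype b _ fun _ => Nat.factorial_zero).symm
  have cast_ne_zero (b : σ →₀ ℕ) : ((b.prod fun _ => Nat.factorial : ℕ) : K) ≠ 0 :=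
    Nat.cast_ne_zero.2 (prod_factorial_ne_zero b)
  have prod_eq_smul : ∏ i, (r * a i).factorial = (r • a).prod fun _ => Nat.factorial :=
    prod_eq (r • a)
  refine (IsUnit.mk0 _ (cast_ne_zero a)).smul_left_cancel.1 ?_
  rw [← map_smul, prod_factorial_smul_dividedPowerMonomial, hφ, prod_eq, prod_eq_smul,
    ← prod_factorial_smul_dividedPowerMonomial, smul_smul, div_mul_cancel₀ _ (cast_ne_zero _)]

theorem semiconjBy_pderiv (hφ : IsInflation r φ) (hr : r ≠ 0) (j : σ) :
    SemiconjBy φ (pderiv j).toLinearMap ((pderiv j).toLinearMap ^ r) := by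
  refine linearMap_ext_dividedPowerMonomial fun a => ?_
  change φ (pderiv j (dividedPowerMonomial a)) =
    ((pderiv j).toLinearMap ^ r : Module.End K _) (φ (dividedPowerMonomial a))
  rw [hφ]
  by_cases ha : a j = 0
  · obtain ⟨s, rfl⟩ := Nat.exists_eq_succ_of_ne_zero hr
    have hra : pderiv j (dividedPowerMonomial ((s + 1) • a) : MvPolynomial σ K) = 0 :=
      pderiv_dividedPowerMonomial_of_eq_zero (by simp [ha])
    rw [pderiv_dividedPowerMonomial_of_eq_zero ha, map_zero, pow_succ, Module.End.mul_apply,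
      Derivation.coeFn_coe, hra, map_zero]
  · obtain ⟨b, rfl⟩ : ∃ b, a = b + Finsupp.single j 1 :=
      ⟨_, (Finsupp.sub_add_single_one_cancel ha).symm⟩
    rw [pderiv_dividedPowerMonomial_add_single, hφ, smul_add, Finsupp.smul_single_one,
      pderiv_pow_dividedPowerMonomial_add_single]

theorem semiconjBy_X_mul_pderiv (hφ : IsInflation r φ) (j : σ) :
    SemiconjBy φ ((r : K) • (LinearMap.mulLeft K (X j) * (pderiv j).toLinearMap))
      (LinearMap.mulLeft K (X j) * (pderiv j).toLinearMap) := by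
  refine linearMap_ext_dividedPowerMonomial fun a => ?_
  change φ ((r : K) • (X j * pderiv j (dividedPowerMonomial a))) =
    X j * pderiv j (φ (dividedPowerMonomial a))
  rw [hφ, X_mul_pderiv_dividedPowerMonomial, X_mul_pderiv_dividedPowerMonomial, map_smul,
    map_smul, hφ, smul_smul, Finsupp.smul_apply, smul_eq_mul, Nat.cast_mul]

end IsInflation

section Dq1

variable {K : Type*} [Field K] {n : ℕ}

theorem smul_Dq1_div_apply {c : K} (hc : c ≠ 0) (q : K) (m : ℕ) (f : MvPolynomial (Fin n) K) :
    c • Dq1 n (q / c) m f = ∑ j : Fin n,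
      (c • ((pderiv j).toLinearMap ^ m : Module.End K (MvPolynomial (Fin n) K)) f +
        q • (X j * pderiv j
          (((pderiv j).toLinearMap ^ m : Module.End K (MvPolynomial (Fin n) K)) f))) := by
  rw [Dq1, LinearMap.sum_apply, Finset.smul_sum]
  refine Finset.sum_congr rfl fun j _ => ?_
  simp only [Module.End.mul_apply, LinearMap.add_apply, Module.End.one_apply,
    LinearMap.smul_apply, LinearMap.mulLeft_apply, Derivation.coeFn_coe, smul_add, smul_smul,
    mul_div_cancel₀ q hc]

theorem IsInflation.semiconjBy_Dq1 [CharZero K] {r : ℕ}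
    {φ : Module.End K (MvPolynomial (Fin n) K)} (hφ : IsInflation r φ) (hr : r ≠ 0)
    (q : K) (k : ℕ) : SemiconjBy φ (Dq1 n q k) (Dq1 n (q / r) (r * k)) := by
  have hr' : (r : K) ≠ 0 := Nat.cast_ne_zero.2 hr
  have semiconj_euler (j : Fin n) :
      SemiconjBy φ (1 + q • (LinearMap.mulLeft K (X j) * (pderiv j).toLinearMap))
        (1 + (q / r) • (LinearMap.mulLeft K (X j) * (pderiv j).toLinearMap)) := by
    have h := (hφ.semiconjBy_X_mul_pderiv j).smul_right (q / (r : K))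
    rw [smul_smul, div_mul_cancel₀ q hr'] at h
    exact (SemiconjBy.one_right φ).add_right h
  have semiconj_pow (j : Fin n) :
      SemiconjBy φ ((pderiv j).toLinearMap ^ k) ((pderiv j).toLinearMap ^ (r * k)) := by
    rw [pow_mul]
    exact (hφ.semiconjBy_pderiv hr j).pow_right k
  rw [SemiconjBy, Dq1, Dq1, Finset.mul_sum, Finset.sum_mul]
  exact Finset.sum_congr rfl fun j _ => ((semiconj_euler j).mul_right (semiconj_pow j)).eq

end Dq1

/-- The inflation `φ̄_r` (sending the divided-power monomial `x^{(a)}` to `x^{(ra)}`)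
intertwines `D_{q,k}` and `D_{q/r, rk}`: explicitly,
`∑_j (r + q x_j∂_j) ∂_j^{rk} (φ̄_r f) = r φ̄_r (D_{q,k} f)`. -/
theorem inflate_dual_comm_Dq {K : Type*} [Field K] [CharZero K] {n : ℕ} (hn : 1 ≤ n)
    (q : K) (r : ℕ) (hr : 1 ≤ r)
    (φ : MvPolynomial (Fin n) K →ₗ[K] MvPolynomial (Fin n) K)
    (hφ : ∀ a : Fin n →₀ ℕ,
      φ (monomial a 1)
        = (((∏ j, (a j).factorial : ℕ) : K) / ((∏ j, (r * a j).factorial : ℕ) : K)) •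
            monomial (r • a) 1)
    (k : ℕ) :
    (∀ f : MvPolynomial (Fin n) K,
      ∑ j : Fin n,
          ((r : K) • ((((pderiv j).toLinearMap :
                Module.End K (MvPolynomial (Fin n) K)) ^ (r * k)) (φ f))
            + q • (X j * pderiv j ((((pderiv j).toLinearMap :
                Module.End K (MvPolynomial (Fin n) K)) ^ (r * k)) (φ f))))
        = (r : K) • φ (Dq1 n q k f))
    ∧ Dq1 n (q / (r : K)) (r * k) * φ = φ * Dq1 n q k := by
  have hr0 : r ≠ 0 := Nat.one_le_iff_ne_zero.1 hr
  have comm : Dq1 n (q / (r : K)) (r * k) * φ = φ * Dq1 n q k :=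
    ((IsInflation.of_apply_monomial hφ).semiconjBy_Dq1 hr0 q k).eq.symm
  refine ⟨fun f => ?_, comm⟩
  rw [← smul_Dq1_div_apply (Nat.cast_ne_zero.2 hr0)]
  exact congrArg ((r : K) • ·) (LinearMap.congr_fun comm f)
end

section
/- Let r ≥ 1 be an integer and let φ_r : K[x_1,…,x_n] → K[x_1,…,x_n] be the K-algebra endomorphism determined by x_j ↦ x_j^r for all j. For k ∈ ℕ define the deformed power sum operator P_{q,k} := Σ_{j=1}^n x_j^k·(1 + q·x_j∂_{x_j}). Then for every k ∈ ℕ and every f ∈ K[x_1,…,x_n], Σ_{j=1}^n x_j^{rk}(r + q·x_j∂_{x_j})(φ_r f) = r·φ_r(P_{q,k} f). Equivalently, P_{q/r, rk} ∘ φ_r = φ_r ∘ P_{q,k}. -/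
/-!
Monomials are eigenvectors of the Euler operators `x_j ∂_j`, with the exponents as eigenvalues, and
`φ_r` multiplies every exponent by `r`. Hence `x_j ∂_j ∘ φ_r = r φ_r ∘ x_j ∂_j`: moving past `φ_r`
turns `x_j^{rk} (a + b x_j ∂_j)` into `x_j^k (a + r b x_j ∂_j)`, and both identities are instances,
with `(a, b) = (r, q)` and `(a, b) = (1, q / r)`.
-/

open MvPolynomial

/-- The deformed power sum operator `P_{q,k} = ∑_j x_j^k (1 + q x_j ∂_j)` on `K[x_1,…,x_n]`. -/
noncomputable def Pq1 {K : Type*} [Field K] (n : ℕ) (q : K) (k : ℕ) :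
    Module.End K (MvPolynomial (Fin n) K) :=
  ∑ j : Fin n,
    LinearMap.mulLeft K (X j ^ k) *
      (1 + q • (LinearMap.mulLeft K (X j) * (pderiv j).toLinearMap))

section Inflation

variable {R σ : Type*} [CommSemiring R]

theorem X_mul_pderiv_expand (r : ℕ) (j : σ) (f : MvPolynomial σ R) :
    X j * pderiv j (expand r f) = (r : R) • expand r (X j * pderiv j f) := by
  induction f using MvPolynomial.induction_on' with
  | monomial m c =>
    calc X j * pderiv j (expand r (monomial m c))
        = (r * m j) • monomial (r • m) c := by
          rw [expand_monomial, X_mul_pderiv_monomial, Finsupp.smul_apply, smul_eq_mul]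
      _ = (r : R) • expand r (X j * pderiv j (monomial m c)) := by
          rw [X_mul_pderiv_monomial, map_nsmul, expand_monomial, Nat.cast_smul_eq_nsmul, mul_smul]
  | add f g hf hg => simp only [map_add, mul_add, smul_add, hf, hg]

theorem X_pow_mul_smul_add_smul_X_mul_pderiv_expand (a b : R) (r k : ℕ) (j : σ)
    (f : MvPolynomial σ R) :
    X j ^ (r * k) * (a • expand r f + b • (X j * pderiv j (expand r f))) =
      expand r (X j ^ k * (a • f + (r * b) • (X j * pderiv j f))) := by
  rw [X_mul_pderiv_expand, smul_smul, mul_comm b, map_mul _ (X j ^ k), map_add, map_smul, map_smul,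
    map_pow, expand_X, ← pow_mul]

variable [Fintype σ]

/-- The deformed power sum operator `P_{q,k} = ∑_j x_j^k (1 + q x_j ∂_j)` over a commutative
semiring, in variables indexed by a finite type. For `σ = Fin n` over a field it is definitionally
`Pq1 n q k`, as `expand r` is definitionally the `φ_r` given by `aeval`. -/
noncomputable def deformedPowerSum (q : R) (k : ℕ) : Module.End R (MvPolynomial σ R) :=
  ∑ j : σ,
    LinearMap.mulLeft R (X j ^ k) *
      (1 + q • (LinearMap.mulLeft R (X j) * (pderiv j).toLinearMap))

theorem deformedPowerSum_apply (q : R) (k : ℕ) (f : MvPolynomial σ R) :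
    deformedPowerSum q k f = ∑ j : σ, X j ^ k * (f + q • (X j * pderiv j f)) := by
  simp [deformedPowerSum, LinearMap.sum_apply]

theorem deformedPowerSum_comp_expand (q : R) (r k : ℕ) :
    deformedPowerSum q (r * k) ∘ₗ (expand r).toLinearMap =
      (expand r).toLinearMap ∘ₗ (deformedPowerSum (r * q) k : Module.End R (MvPolynomial σ R)) := by
  refine LinearMap.ext fun f ↦ ?_
  simp only [LinearMap.comp_apply, AlgHom.toLinearMap_apply, deformedPowerSum_apply, map_sum]
  refine Finset.sum_congr rfl fun j _ ↦ ?_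
  simpa only [one_smul] using X_pow_mul_smul_add_smul_X_mul_pderiv_expand 1 q r k j f

theorem inflate_comm_Pq_general (q : R) (r k : ℕ) :
    (∀ f : MvPolynomial σ R,
      ∑ j : σ, X j ^ (r * k) * ((r : R) • expand r f + q • (X j * pderiv j (expand r f))) =
        (r : R) • expand r (deformedPowerSum q k f)) ∧
    ∀ q' : R, r * q' = q →
      deformedPowerSum q' (r * k) ∘ₗ (expand r).toLinearMap =
        (expand r).toLinearMap ∘ₗ (deformedPowerSum q k : Module.End R (MvPolynomial σ R)) := by
  refine ⟨fun f ↦ ?_, fun q' hq' ↦ hq' ▸ deformedPowerSum_comp_expand q' r k⟩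
  rw [deformedPowerSum_apply, map_sum, Finset.smul_sum]
  refine Finset.sum_congr rfl fun j _ ↦ ?_
  rw [X_pow_mul_smul_add_smul_X_mul_pderiv_expand, mul_smul, ← smul_add,
    mul_smul_comm, map_smul]

end Inflation

/-- The inflation `φ_r : x_j ↦ x_j^r` intertwines `P_{q,k}` and `P_{q/r, rk}`: explicitly,
`∑_j x_j^{rk}(r + q x_j∂_j)(φ_r f) = r φ_r(P_{q,k} f)`. -/
theorem inflate_comm_Pq {K : Type*} [Field K] [CharZero K] {n : ℕ} (hn : 1 ≤ n)
    (q : K) (r : ℕ) (hr : 1 ≤ r) (k : ℕ) :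
    (∀ f : MvPolynomial (Fin n) K,
      ∑ j : Fin n,
          X j ^ (r * k) *
            ((r : K) • (aeval (fun j : Fin n => (X j : MvPolynomial (Fin n) K) ^ r) f)
              + q • (X j * pderiv j
                  (aeval (fun j : Fin n => (X j : MvPolynomial (Fin n) K) ^ r) f)))
        = (r : K) • aeval (fun j : Fin n => (X j : MvPolynomial (Fin n) K) ^ r)
            (Pq1 n q k f))
    ∧ Pq1 n (q / (r : K)) (r * k) ∘ₗ
          (aeval (fun j : Fin n => (X j : MvPolynomial (Fin n) K) ^ r)).toLinearMap
        = (aeval (fun j : Fin n => (X j : MvPolynomial (Fin n) K) ^ r)).toLinearMap ∘ₗ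
            Pq1 n q k := by
  have hr0 : (r : K) ≠ 0 := Nat.cast_ne_zero.mpr (Nat.one_le_iff_ne_zero.mp hr)
  exact (inflate_comm_Pq_general q r k).imp_right fun h ↦ h _ (mul_div_cancel₀ q hr0)
end

section
/- Let m ≥ 1 and let φ̄_m : K[x_1,…,x_n] → K[x_1,…,x_n] be the linear map sending each monomial x^a (a ∈ ℕ^n) to (a_1!⋯a_n!/((ma_1)!⋯(ma_n)!))·x^{ma}. Let g ∈ K[x_1,…,x_n] be a polynomial all of whose monomials have every exponent divisible by m (so g ∈ K[x_1^m,…,x_n^m]). Then Σ_{j=1}^n (m + q·x_j∂_{x_j}) ∂_{x_j}^{k} g = 0 for every positive multiple k of m if and only if g = φ̄_m(f) for some f ∈ K[x_1,…,x_n] satisfying D_{q,k} f = 0 for every integer k ≥ 1. In other words, φ̄_m restricts to a linear isomorphism from the q-harmonic polynomials for S_n onto the intersection of the (q/m)-harmonic polynomials for G(m,n) with K[x_1^m,…,x_n^m]. -/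
/-!
In the basis of divided powers `x^[a] = x^a / a!` the map `φ̄_m` is just the reindexing
`x^[a] ↦ x^[m • a]`, while `∂_j` lowers the index by `e_j` and `x_j ∂_j` multiplies `x^[a]` by
`a_j`. Hence `φ̄_m ∘ ∂_j = ∂_j^m ∘ φ̄_m` and `x_j ∂_j ∘ φ̄_m = m φ̄_m ∘ x_j ∂_j`, so the operator
`∑_j (m + q x_j ∂_j) ∂_j^(m t)` takes `φ̄_m f` to `m φ̄_m (D_{q,t} f)`. It remains to note that
`φ̄_m` is injective with image `K[x_1^m, …, x_n^m]`.
-/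

open MvPolynomial

section MultiFactorial

variable {σ : Type*}

/-- The multi-index factorial `a! = ∏ i, (a i)!`. It normalizes the divided powers. -/
def multiFactorial (a : σ →₀ ℕ) : ℕ :=
  a.prod fun _ k => k.factorial

lemma multiFactorial_ne_zero (a : σ →₀ ℕ) : multiFactorial a ≠ 0 :=
  Finset.prod_ne_zero_iff.2 fun _ _ => Nat.factorial_ne_zero _

lemma multiFactorial_eq_prod [Fintype σ] (a : σ →₀ ℕ) :
    multiFactorial a = ∏ i, (a i).factorial :=
  a.prod_fintype _ fun _ => Nat.factorial_zero

lemma multiFactorial_add_single (a : σ →₀ ℕ) (j : σ) :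
    multiFactorial (a + Finsupp.single j 1) = (a j + 1) * multiFactorial a := by
  have hsplit (b : σ →₀ ℕ) : multiFactorial b = (b j).factorial * multiFactorial (b.erase j) :=
    (Finsupp.mul_prod_erase' b j _ fun _ => Nat.factorial_zero).symm
  rw [hsplit (a + _), hsplit a, Finsupp.erase_add, Finsupp.erase_single, add_zero,
    Finsupp.add_apply, Finsupp.single_eq_same, Nat.factorial_succ, mul_assoc]

end MultiFactorial

section DividedPowers

variable {σ : Type*} (K : Type*) [Field K] [CharZero K]

/-- The basis of divided powers `x^[a] = x^a / a!` of the polynomial ring, in which partial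
derivatives act by lowering the multi-index. -/
noncomputable def dividedPowerBasis : Module.Basis (σ →₀ ℕ) K (MvPolynomial σ K) :=
  (basisMonomials σ K).isUnitSMul (w := fun a => (multiFactorial a : K)⁻¹) fun a =>
    (inv_ne_zero (Nat.cast_ne_zero.2 (multiFactorial_ne_zero a))).isUnit

lemma dividedPowerBasis_apply (a : σ →₀ ℕ) :
    dividedPowerBasis K a = monomial a (multiFactorial a : K)⁻¹ := by
  simp [dividedPowerBasis, Module.Basis.isUnitSMul_apply, smul_monomial]

lemma monomial_one_eq_smul_dividedPowerBasis (a : σ →₀ ℕ) :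
    monomial a (1 : K) = (multiFactorial a : K) • dividedPowerBasis K a := by
  have ha : (multiFactorial a : K) ≠ 0 := Nat.cast_ne_zero.2 (multiFactorial_ne_zero a)
  rw [dividedPowerBasis_apply, smul_monomial, smul_eq_mul, mul_inv_cancel₀ ha]

lemma pderiv_dividedPowerBasis_add_single (a : σ →₀ ℕ) (j : σ) :
    pderiv j (dividedPowerBasis K (a + Finsupp.single j 1)) = dividedPowerBasis K a := by
  have hcoeff : (multiFactorial (a + Finsupp.single j 1) : K)⁻¹ * (a j + 1) =
      (multiFactorial a : K)⁻¹ := by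
    rw [multiFactorial_add_single]
    push_cast
    field_simp
  simp only [dividedPowerBasis_apply, pderiv_monomial, add_tsub_cancel_right, Finsupp.add_apply,
    Finsupp.single_eq_same, Nat.cast_add, Nat.cast_one, hcoeff]

lemma pderiv_dividedPowerBasis_of_apply_eq_zero {a : σ →₀ ℕ} {j : σ} (ha : a j = 0) :
    pderiv j (dividedPowerBasis K a) = 0 := by
  rw [dividedPowerBasis_apply, pderiv_monomial, ha, Nat.cast_zero, mul_zero, monomial_zero]

lemma pderiv_pow_dividedPowerBasis_add_single (a : σ →₀ ℕ) (j : σ) (k : ℕ) :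
    ((pderiv j).toLinearMap ^ k : Module.End K (MvPolynomial σ K))
      (dividedPowerBasis K (a + Finsupp.single j k)) = dividedPowerBasis K a := by
  induction k with
  | zero => simp
  | succ k ih =>
    rw [pow_succ, Module.End.mul_apply, Finsupp.single_add, ← add_assoc,
      Derivation.coeFn_coe, pderiv_dividedPowerBasis_add_single, ih]

lemma X_mul_pderiv_dividedPowerBasis (a : σ →₀ ℕ) (j : σ) :
    X j * pderiv j (dividedPowerBasis K a) = a j • dividedPowerBasis K a := by
  rw [dividedPowerBasis_apply, X_mul_pderiv_monomial]

end DividedPowers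

section Inflate

variable {σ : Type*} (K : Type*) [Field K] [CharZero K]

/-- The inflation `φ̄_m`, defined on divided powers by `x^[a] ↦ x^[m • a]`; `inflate_monomial_one`
gives its values on ordinary monomials. -/
noncomputable def inflate (m : ℕ) : Module.End K (MvPolynomial σ K) :=
  (dividedPowerBasis K).constr K fun a => dividedPowerBasis K (m • a)

lemma inflate_dividedPowerBasis (m : ℕ) (a : σ →₀ ℕ) :
    inflate K m (dividedPowerBasis K a) = dividedPowerBasis K (m • a) :=
  (dividedPowerBasis K).constr_basis K _ a

lemma inflate_monomial_one (m : ℕ) (a : σ →₀ ℕ) :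
    inflate K m (monomial a 1) =
      ((multiFactorial a : K) / (multiFactorial (m • a) : K)) • monomial (m • a) 1 := by
  rw [monomial_one_eq_smul_dividedPowerBasis, map_smul, inflate_dividedPowerBasis,
    dividedPowerBasis_apply, smul_monomial, smul_monomial, smul_eq_mul, smul_eq_mul, mul_one,
    div_eq_mul_inv]

lemma inflate_injective {m : ℕ} (hm : m ≠ 0) :
    Function.Injective (inflate K m : Module.End K (MvPolynomial σ K)) :=
  (dividedPowerBasis K).injective_constr_of_linearIndependent
    ((dividedPowerBasis K).linearIndependent.comp _ (nsmul_right_injective hm))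

lemma range_inflate (m : ℕ) :
    LinearMap.range (inflate K m : Module.End K (MvPolynomial σ K)) =
      restrictSupport K (Set.range fun a => m • a) := by
  rw [inflate, Module.Basis.constr_range, restrictSupport_eq_span, ← Set.range_comp]
  apply le_antisymm <;> rw [Submodule.span_le, Set.range_subset_iff] <;> intro a
  · rw [dividedPowerBasis_apply, ← mul_one (_ : K)⁻¹, ← smul_eq_mul, ← smul_monomial]
    exact Submodule.smul_mem _ _ (Submodule.subset_span ⟨a, rfl⟩)
  · rw [Function.comp_apply, monomial_one_eq_smul_dividedPowerBasis]
    exact Submodule.smul_mem _ _ (Submodule.subset_span ⟨a, rfl⟩)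

lemma semiconjBy_inflate_pderiv {m : ℕ} (hm : m ≠ 0) (j : σ) :
    SemiconjBy (inflate K m) (pderiv j).toLinearMap ((pderiv j).toLinearMap ^ m) := by
  refine (dividedPowerBasis K).ext fun a => ?_
  simp only [Module.End.mul_apply, inflate_dividedPowerBasis, Derivation.coeFn_coe]
  obtain ha | ha := eq_or_ne (a j) 0
  · have hma : (m • a) j = 0 := by rw [Finsupp.smul_apply, ha, smul_zero]
    rw [← pow_sub_one_mul hm, Module.End.mul_apply, Derivation.coeFn_coe,
      pderiv_dividedPowerBasis_of_apply_eq_zero K ha,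
      pderiv_dividedPowerBasis_of_apply_eq_zero K hma, map_zero, map_zero]
  · obtain ⟨b, rfl⟩ : ∃ b, a = b + Finsupp.single j 1 :=
      ⟨a - Finsupp.single j 1, (tsub_add_cancel_of_le
        (Finsupp.single_le_iff.2 (Nat.one_le_iff_ne_zero.2 ha))).symm⟩
    rw [pderiv_dividedPowerBasis_add_single, inflate_dividedPowerBasis, smul_add,
      Finsupp.smul_single, smul_eq_mul, mul_one, pderiv_pow_dividedPowerBasis_add_single]

variable {K}

lemma eq_inflate_of_apply_monomial_one [Fintype σ] {m : ℕ} {φ : Module.End K (MvPolynomial σ K)}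
    (hφ : ∀ a : σ →₀ ℕ, φ (monomial a 1) =
      (((∏ j, (a j).factorial : ℕ) : K) / ((∏ j, (m * a j).factorial : ℕ) : K)) •
        monomial (m • a) 1) :
    φ = inflate K m := by
  refine (basisMonomials σ K).ext fun a => ?_
  rw [coe_basisMonomials, hφ, inflate_monomial_one, multiFactorial_eq_prod, multiFactorial_eq_prod]
  simp only [Finsupp.smul_apply, smul_eq_mul]

lemma mem_range_inflate_of_dvd {m : ℕ} {g : MvPolynomial σ K}
    (hg : ∀ a ∈ g.support, ∀ j, m ∣ a j) : g ∈ LinearMap.range (inflate K m) := by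
  rw [range_inflate, mem_restrictSupport_iff]
  intro a ha
  exact ⟨a.mapRange (· / m) (Nat.zero_div m), Finsupp.ext fun j => Nat.mul_div_cancel' (hg a ha j)⟩

lemma pderiv_pow_mul_inflate {m : ℕ} (hm : m ≠ 0) (j : σ) (t : ℕ) (f : MvPolynomial σ K) :
    ((pderiv j).toLinearMap ^ (m * t) : Module.End K (MvPolynomial σ K)) (inflate K m f) =
      inflate K m (((pderiv j).toLinearMap ^ t : Module.End K (MvPolynomial σ K)) f) := by
  rw [pow_mul]
  exact (LinearMap.congr_fun ((semiconjBy_inflate_pderiv K hm j).pow_right t) f).symm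

lemma X_mul_pderiv_inflate (m : ℕ) (j : σ) (f : MvPolynomial σ K) :
    X j * pderiv j (inflate K m f) = (m : K) • inflate K m (X j * pderiv j f) := by
  let euler : Module.End K (MvPolynomial σ K) :=
    LinearMap.mulLeft K (X j) * (pderiv j).toLinearMap
  suffices h : euler * inflate K m = (m : K) • (inflate K m * euler) from LinearMap.congr_fun h f
  refine (dividedPowerBasis K).ext fun a => ?_
  change X j * pderiv j (inflate K m _) = (m : K) • inflate K m (X j * pderiv j _)
  rw [inflate_dividedPowerBasis, X_mul_pderiv_dividedPowerBasis, X_mul_pderiv_dividedPowerBasis,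
    map_nsmul (inflate K m), inflate_dividedPowerBasis, Nat.cast_smul_eq_nsmul, smul_smul,
    Finsupp.smul_apply, smul_eq_mul]

end Inflate

lemma Dq1_apply {K : Type*} [Field K] {n : ℕ} (q : K) (k : ℕ) (f : MvPolynomial (Fin n) K) :
    Dq1 n q k f = ∑ j : Fin n,
      (((pderiv j).toLinearMap ^ k : Module.End K (MvPolynomial (Fin n) K)) f +
        q • (X j * pderiv j
          (((pderiv j).toLinearMap ^ k : Module.End K (MvPolynomial (Fin n) K)) f))) := by
  rw [Dq1, LinearMap.sum_apply]
  rfl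

lemma sum_deformed_pderiv_pow_inflate {K : Type*} [Field K] [CharZero K] {n m : ℕ} (hm : m ≠ 0)
    (q : K) (t : ℕ) (f : MvPolynomial (Fin n) K) :
    ∑ j : Fin n,
        ((m : K) • (((pderiv j).toLinearMap ^ (m * t) :
            Module.End K (MvPolynomial (Fin n) K)) (inflate K m f)) +
          q • (X j * pderiv j (((pderiv j).toLinearMap ^ (m * t) :
            Module.End K (MvPolynomial (Fin n) K)) (inflate K m f)))) =
      (m : K) • inflate K m (Dq1 n q t f) := by
  simp only [Dq1_apply, map_sum, map_add, map_smul, Finset.smul_sum, smul_add,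
    pderiv_pow_mul_inflate hm, X_mul_pderiv_inflate, smul_comm q]

/-- `φ̄_m` restricts to a linear isomorphism from the `q`-harmonic polynomials for `S_n`
onto the `(q/m)`-harmonic polynomials for `G(m,n)` lying in `K[x_1^m,…,x_n^m]`. -/
theorem inflate_qHarmonic_iff {K : Type*} [Field K] [CharZero K] {n : ℕ} (hn : 1 ≤ n)
    (q : K) (m : ℕ) (hm : 1 ≤ m)
    (φ : MvPolynomial (Fin n) K →ₗ[K] MvPolynomial (Fin n) K)
    (hφ : ∀ a : Fin n →₀ ℕ,
      φ (monomial a 1)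
        = (((∏ j, (a j).factorial : ℕ) : K) / ((∏ j, (m * a j).factorial : ℕ) : K)) •
            monomial (m • a) 1)
    (g : MvPolynomial (Fin n) K) (hg : ∀ a ∈ g.support, ∀ j : Fin n, m ∣ a j) :
    (∀ k : ℕ, (∃ t : ℕ, 0 < t ∧ k = m * t) →
        ∑ j : Fin n,
            ((m : K) • ((((pderiv j).toLinearMap :
                  Module.End K (MvPolynomial (Fin n) K)) ^ k) g)
              + q • (X j * pderiv j ((((pderiv j).toLinearMap :
                  Module.End K (MvPolynomial (Fin n) K)) ^ k) g))) = 0)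
      ↔ ∃ f : MvPolynomial (Fin n) K,
          (∀ k : ℕ, 1 ≤ k → Dq1 n q k f = 0) ∧ g = φ f := by
  have hm₀ : m ≠ 0 := Nat.one_le_iff_ne_zero.1 hm
  obtain rfl : φ = inflate K m := eq_inflate_of_apply_monomial_one hφ
  constructor
  · intro hharm
    obtain ⟨f, rfl⟩ := mem_range_inflate_of_dvd hg
    refine ⟨f, fun t ht => inflate_injective K hm₀ ?_, rfl⟩
    have hzero := hharm (m * t) ⟨t, ht, rfl⟩
    rw [sum_deformed_pderiv_pow_inflate hm₀] at hzero
    rw [map_zero, (smul_eq_zero_iff_right (Nat.cast_ne_zero.2 hm₀)).1 hzero]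
  · rintro ⟨f, hf, rfl⟩ k ⟨t, ht, rfl⟩
    rw [sum_deformed_pderiv_pow_inflate hm₀, hf t ht, map_zero, smul_zero]
end

section
/- Let m ≥ 1 be an integer and suppose that 1 + q·b ≠ 0 for every integer b with 1 ≤ b ≤ m (i.e., q is not of the form −1/b with 1 ≤ b ≤ m). Then the 2m polynomials {1, x, x^2, …, x^{m−1}, x^m − y^m, y, y^2, …, y^{m−1}} form a K-basis of the space H_q(G(m,m,2)) := {f ∈ K[x,y] : D_{q,m} f = 0, D_{q,2m} f = 0, ∂_x∂_y f = 0} of q-harmonic polynomials for the dihedral group G(m,m,2). In particular this space has dimension 2m. -/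
open MvPolynomial

/-- The deformed operator `D_{q,k} = (1 + q x∂_x)∂_x^k + (1 + q y∂_y)∂_y^k` on `K[x,y]`,
with `x = X 0` and `y = X 1`. -/
noncomputable def D2 {K : Type*} [Field K] (q : K) (k : ℕ) :
    Module.End K (MvPolynomial (Fin 2) K) :=
  (1 + q • (LinearMap.mulLeft K (X 0) * (pderiv 0).toLinearMap)) *
      ((pderiv (0 : Fin 2)).toLinearMap : Module.End K (MvPolynomial (Fin 2) K)) ^ k
    + (1 + q • (LinearMap.mulLeft K (X 1) * (pderiv 1).toLinearMap)) *
        ((pderiv (1 : Fin 2)).toLinearMap : Module.End K (MvPolynomial (Fin 2) K)) ^ k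

/-- The deformed Pochhammer symbol `⟨d⟩_k = d(d-1)⋯(d-k+1)(1 + q(d-k))`. -/
noncomputable def tp {K : Type*} [Field K] (q : K) (d k : ℕ) : K :=
  (∏ i ∈ Finset.range k, ((d : K) - (i : K))) * (1 + q * ((d : K) - (k : K)))

/-! A polynomial `f` with `∂_x ∂_y f = 0` has no mixed monomials, so `D_{q,k}` acts on it through
`D_{q,k} x^d = ⟨d⟩_k x^{d-k}`, and likewise for `y`. Hence `D_{q,m} f = 0` ties the coefficients of
`x^m` and `y^m` together, and kills a pure power of degree `d > m` unless `1 + q (d - m) = 0`.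
In the exceptional case the hypothesis on `q` forces `d > 2m`, and `D_{q,2m}` takes over:
`1 + q (d - 2m)` cannot vanish as well. The coefficients of `1, x, …, x^m, y^{m-1}, …, y` are
therefore coordinates on the space of `q`-harmonic polynomials, dual to the claimed basis. -/

section Coefficients

variable {R σ : Type*} [CommSemiring R]

theorem coeff_single_X_pow_of_ne {n d : ℕ} (h : n ≠ d) (i j : σ) :
    coeff (Finsupp.single j d) (X i ^ n : MvPolynomial σ R) = 0 := by
  classical
  rw [coeff_X_pow, if_neg]
  rw [Finsupp.single_eq_single_iff]
  lia

theorem coeff_X_mul_pderiv (i : σ) (f : MvPolynomial σ R) (e : σ →₀ ℕ) :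
    coeff e (X i * pderiv i f) = e i * coeff e f := by
  classical
  induction f using MvPolynomial.induction_on' with
  | monomial u a =>
    rw [X_mul_pderiv_monomial, coeff_smul, nsmul_eq_mul, coeff_monomial]
    split_ifs with h
    · rw [h]
    · simp only [mul_zero]
  | add p r hp hr => rw [map_add, mul_add, coeff_add, hp, hr, coeff_add, mul_add]

theorem coeff_iterate_pderiv (i : σ) (k : ℕ) (f : MvPolynomial σ R) (e : σ →₀ ℕ) :
    coeff e ((pderiv i)^[k] f) = (e i + k).descFactorial k * coeff (e + Finsupp.single i k) f := by
  induction k generalizing f with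
  | zero => simp
  | succ k ih =>
    rw [Function.iterate_succ_apply, ih, coeff_pderiv, add_assoc, ← Finsupp.single_add,
      ← add_assoc (e i), Nat.succ_descFactorial_succ, Finsupp.add_apply, Finsupp.single_eq_same]
    push_cast
    ring

theorem pderiv_pderiv_eq_zero_iff [NoZeroDivisors R] [CharZero R] {i j : σ} (hij : i ≠ j)
    (f : MvPolynomial σ R) :
    pderiv i (pderiv j f) = 0 ↔ ∀ e : σ →₀ ℕ, e i ≠ 0 → e j ≠ 0 → coeff e f = 0 := by
  have coeff_eq_zero_iff (e : σ →₀ ℕ) : coeff e (pderiv i (pderiv j f)) = 0 ↔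
      coeff (e + Finsupp.single i 1 + Finsupp.single j 1) f = 0 := by
    simp [coeff_pderiv, Nat.cast_add_one_ne_zero, hij.symm]
  simp only [MvPolynomial.ext_iff, coeff_zero, coeff_eq_zero_iff]
  refine ⟨fun h e hi hj ↦ ?_, fun h e ↦ h _ (by simp) (by simp)⟩
  have he : Finsupp.single i 1 + Finsupp.single j 1 ≤ e := by
    classical
    intro l
    simp only [Finsupp.add_apply, Finsupp.single_apply]
    grind
  rw [← tsub_add_cancel_of_le he, ← add_assoc]
  exact h _

end Coefficients

theorem ne_zero_and_ne_zero_or_eq_single {M : Type*} [Zero M] (e : Fin 2 →₀ M) :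
    (e 0 ≠ 0 ∧ e 1 ≠ 0) ∨ ∃ i n, e = Finsupp.single i n := by
  by_cases h₀ : e 0 = 0
  · exact .inr ⟨1, e 1, by ext j; fin_cases j <;> simp [h₀]⟩
  by_cases h₁ : e 1 = 0
  · exact .inr ⟨0, e 0, by ext j; fin_cases j <;> simp [h₁]⟩
  exact .inl ⟨h₀, h₁⟩

section DeformedOperator

variable {K : Type*} [Field K]

theorem tp_add_self (q : K) (n k : ℕ) :
    tp q (n + k) k = ((n + k).descFactorial k : ℕ) * (1 + q * n) := by
  rw [tp, ← descPochhammer_eval_eq_prod_range, descPochhammer_eval_eq_descFactorial]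
  push_cast
  ring

theorem tp_self (q : K) (k : ℕ) : tp q k k = k.factorial := by
  simpa [Nat.descFactorial_self] using tp_add_self q 0 k

theorem tp_add_self_eq_zero_iff [CharZero K] (q : K) (n k : ℕ) :
    tp q (n + k) k = 0 ↔ 1 + q * n = 0 := by
  rw [tp_add_self, mul_eq_zero, Nat.cast_eq_zero, Nat.descFactorial_eq_zero_iff_lt]
  simp

theorem coeff_D2 (q : K) (k : ℕ) (f : MvPolynomial (Fin 2) K) (e : Fin 2 →₀ ℕ) :
    coeff e (D2 q k f) = tp q (e 0 + k) k * coeff (e + Finsupp.single 0 k) f +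
      tp q (e 1 + k) k * coeff (e + Finsupp.single 1 k) f := by
  simp only [D2, LinearMap.add_apply, Module.End.mul_apply, Module.End.one_apply,
    LinearMap.smul_apply, LinearMap.mulLeft_apply, Module.End.pow_apply, Derivation.coeFn_coe,
    coeff_add, coeff_smul, coeff_X_mul_pderiv, coeff_iterate_pderiv, tp_add_self, smul_eq_mul]
  ring

variable [CharZero K] {f : MvPolynomial (Fin 2) K}

theorem coeff_single_D2 (q : K) {k n : ℕ} (hf : pderiv 0 (pderiv 1 f) = 0) (hk : k ≠ 0)
    (hn : n ≠ 0) (i : Fin 2) :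
    coeff (Finsupp.single i n) (D2 q k f) =
      tp q (n + k) k * coeff (Finsupp.single i (n + k)) f := by
  rw [pderiv_pderiv_eq_zero_iff zero_ne_one] at hf
  rw [coeff_D2, Finsupp.single_add]
  fin_cases i
  · simp [hf (Finsupp.single 0 n + Finsupp.single 1 k) (by simp [hn]) (by simp [hk])]
  · simp [hf (Finsupp.single 1 n + Finsupp.single 0 k) (by simp [hk]) (by simp [hn])]

theorem D2_eq_zero_iff (q : K) {k : ℕ} (hf : pderiv 0 (pderiv 1 f) = 0) (hk : k ≠ 0) :
    D2 q k f = 0 ↔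
      coeff (Finsupp.single 0 k) f + coeff (Finsupp.single 1 k) f = 0 ∧
        ∀ (i : Fin 2) (n : ℕ), n ≠ 0 → 1 + q * n = 0 ∨ coeff (Finsupp.single i (n + k)) f = 0 := by
  have constant_coeff : coeff 0 (D2 q k f) = 0 ↔
      coeff (Finsupp.single 0 k) f + coeff (Finsupp.single 1 k) f = 0 := by
    simp [coeff_D2, tp_self, ← mul_add, Nat.factorial_ne_zero]
  have single_coeff (i : Fin 2) {n : ℕ} (hn : n ≠ 0) :
      coeff (Finsupp.single i n) (D2 q k f) = 0 ↔
        1 + q * n = 0 ∨ coeff (Finsupp.single i (n + k)) f = 0 := by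
    rw [coeff_single_D2 q hf hk hn, mul_eq_zero, tp_add_self_eq_zero_iff]
  have mixed_coeff {e : Fin 2 →₀ ℕ} (h₀ : e 0 ≠ 0) (h₁ : e 1 ≠ 0) : coeff e (D2 q k f) = 0 := by
    rw [pderiv_pderiv_eq_zero_iff zero_ne_one] at hf
    rw [coeff_D2, hf _ (by simp [h₀]) (by simp [h₁]), hf _ (by simp [h₀]) (by simp [h₁]),
      mul_zero, mul_zero, add_zero]
  rw [← constant_coeff, MvPolynomial.ext_iff]
  refine ⟨fun h ↦ ⟨h 0, fun i n hn ↦ (single_coeff i hn).1 (h _)⟩, fun ⟨h_const, h_pure⟩ e ↦ ?_⟩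
  rcases ne_zero_and_ne_zero_or_eq_single e with ⟨h₀, h₁⟩ | ⟨i, n, rfl⟩
  · exact mixed_coeff h₀ h₁
  · rcases eq_or_ne n 0 with rfl | hn
    · rwa [Finsupp.single_zero]
    · exact (single_coeff i hn).2 (h_pure i n hn)

end DeformedOperator

theorem eq_of_one_add_mul_eq_zero {R : Type*} [CommRing R] {q a b : R} (ha : 1 + q * a = 0)
    (hb : 1 + q * b = 0) : a = b := by
  linear_combination a * hb - b * ha

section Dihedral

variable {K : Type*} [Field K]

/-- The space `H_q(G(m,m,2))` of `q`-harmonic polynomials for the dihedral group `G(m,m,2)`. -/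
noncomputable def qHarmonic (q : K) (m : ℕ) : Submodule K (MvPolynomial (Fin 2) K) :=
  LinearMap.ker (D2 q m) ⊓ LinearMap.ker (D2 q (2 * m)) ⊓
    LinearMap.ker ((pderiv 0).toLinearMap * (pderiv 1).toLinearMap :
      Module.End K (MvPolynomial (Fin 2) K))

variable (K) in
/-- The claimed basis `1, x, …, x^{m-1}, x^m - y^m, y^{m-1}, …, y` of `qHarmonic q m`. -/
noncomputable def dihedralFamily (m : ℕ) (i : Fin (2 * m)) : MvPolynomial (Fin 2) K :=
  if (i : ℕ) < m then X 0 ^ (i : ℕ)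
  else if (i : ℕ) = m then X 0 ^ m - X 1 ^ m
  else X 1 ^ (2 * m - (i : ℕ))

/-- The exponents of the monomials `1, x, …, x^m, y^{m-1}, …, y`, whose coefficients are the
coordinates on `qHarmonic q m` dual to `dihedralFamily K m`. -/
noncomputable def dihedralExponent (m : ℕ) (i : Fin (2 * m)) : Fin 2 →₀ ℕ :=
  if (i : ℕ) ≤ m then Finsupp.single 0 (i : ℕ) else Finsupp.single 1 (2 * m - (i : ℕ))

theorem mem_qHarmonic {q : K} {m : ℕ} {f : MvPolynomial (Fin 2) K} :
    f ∈ qHarmonic q m ↔ D2 q m f = 0 ∧ D2 q (2 * m) f = 0 ∧ pderiv 0 (pderiv 1 f) = 0 := by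
  simp only [qHarmonic, Submodule.mem_inf, LinearMap.mem_ker, Module.End.mul_apply,
    Derivation.coeFn_coe, and_assoc]

theorem coeff_dihedralExponent_dihedralFamily (m : ℕ) (i j : Fin (2 * m)) :
    coeff (dihedralExponent m i) (dihedralFamily K m j) = if i = j then 1 else 0 := by
  have hi := i.isLt
  have hj := j.isLt
  unfold dihedralExponent dihedralFamily
  simp only [Fin.ext_iff]
  split_ifs <;> simp only [coeff_X_pow, coeff_sub, Finsupp.single_eq_single_iff] <;> grind

variable [CharZero K] {q : K} {m : ℕ} {f : MvPolynomial (Fin 2) K}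

theorem mem_qHarmonic_of_coeff (hm : m ≠ 0) (hf : pderiv 0 (pderiv 1 f) = 0)
    (h_mid : coeff (Finsupp.single 0 m) f + coeff (Finsupp.single 1 m) f = 0)
    (h_high : ∀ i d, m < d → coeff (Finsupp.single i d) f = 0) : f ∈ qHarmonic q m := by
  refine mem_qHarmonic.2 ⟨(D2_eq_zero_iff q hf hm).2 ⟨h_mid, fun i n _ ↦ .inr ?_⟩,
    (D2_eq_zero_iff q hf (by lia)).2 ⟨?_, fun i n _ ↦ .inr ?_⟩, hf⟩
  · exact h_high i (n + m) (by lia)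
  · rw [h_high 0 (2 * m) (by lia), h_high 1 (2 * m) (by lia), add_zero]
  · exact h_high i (n + 2 * m) (by lia)

theorem X_pow_mem_qHarmonic (i : Fin 2) {n : ℕ} (hn : n < m) : X i ^ n ∈ qHarmonic q m := by
  have coeff_high (j : Fin 2) {d : ℕ} (hd : m ≤ d) :
      coeff (Finsupp.single j d) (X i ^ n : MvPolynomial (Fin 2) K) = 0 :=
    coeff_single_X_pow_of_ne (by lia) i j
  refine mem_qHarmonic_of_coeff (by lia) ?_ ?_ fun j d hd ↦ coeff_high j hd.le
  · fin_cases i <;> simp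
  · rw [coeff_high 0 le_rfl, coeff_high 1 le_rfl, add_zero]

theorem X_pow_sub_X_pow_mem_qHarmonic : X 0 ^ m - X 1 ^ m ∈ qHarmonic q m := by
  rcases eq_or_ne m 0 with rfl | hm
  · simp
  refine mem_qHarmonic_of_coeff hm ?_ ?_ fun i d hd ↦ ?_
  · simp
  · simp [coeff_X_pow, Finsupp.single_eq_single_iff, hm]
  · rw [coeff_sub, coeff_single_X_pow_of_ne hd.ne, coeff_single_X_pow_of_ne hd.ne, sub_zero]

theorem dihedralFamily_mem_qHarmonic (i : Fin (2 * m)) : dihedralFamily K m i ∈ qHarmonic q m := by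
  unfold dihedralFamily
  split_ifs with h_lt h_eq
  · exact X_pow_mem_qHarmonic 0 h_lt
  · exact X_pow_sub_X_pow_mem_qHarmonic
  · exact X_pow_mem_qHarmonic 1 (by lia)

theorem coeff_add_coeff_eq_zero_of_mem_qHarmonic (hm : m ≠ 0) (hf : f ∈ qHarmonic q m) :
    coeff (Finsupp.single 0 m) f + coeff (Finsupp.single 1 m) f = 0 :=
  have ⟨h_m, _, h_mixed⟩ := mem_qHarmonic.1 hf
  ((D2_eq_zero_iff q h_mixed hm).1 h_m).1

theorem coeff_single_eq_zero_of_mem_qHarmonic (hm : m ≠ 0)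
    (hq : ∀ b : ℕ, 1 ≤ b → b ≤ m → 1 + q * (b : K) ≠ 0) (hf : f ∈ qHarmonic q m) (i : Fin 2)
    {d : ℕ} (hd : m < d) : coeff (Finsupp.single i d) f = 0 := by
  obtain ⟨h_m, h_2m, h_mixed⟩ := mem_qHarmonic.1 hf
  obtain ⟨-, pure_m⟩ := (D2_eq_zero_iff q h_mixed hm).1 h_m
  obtain ⟨-, pure_2m⟩ := (D2_eq_zero_iff q h_mixed (by lia)).1 h_2m
  obtain ⟨n, rfl⟩ := Nat.exists_eq_add_of_le' hd.le
  rcases pure_m i n (by lia) with hn | h_coeff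
  · have hmn : m < n := by
      by_contra! hnm
      exact hq n (by lia) hnm hn
    obtain ⟨l, rfl⟩ := Nat.exists_eq_add_of_le' hmn.le
    have hl : 1 + q * (l : K) ≠ 0 := fun hl ↦
      hm (by simpa using Nat.cast_injective (eq_of_one_add_mul_eq_zero hn hl))
    rw [add_assoc, ← two_mul]
    exact (pure_2m i l (by lia)).resolve_left hl
  · exact h_coeff

theorem eq_zero_of_coeff_dihedralExponent_eq_zero (hm : m ≠ 0)
    (hq : ∀ b : ℕ, 1 ≤ b → b ≤ m → 1 + q * (b : K) ≠ 0) (hf : f ∈ qHarmonic q m)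
    (h : ∀ i, coeff (dihedralExponent m i) f = 0) : f = 0 := by
  have x_low {d : ℕ} (hd : d ≤ m) : coeff (Finsupp.single 0 d) f = 0 := by
    simpa [dihedralExponent, hd] using h ⟨d, by lia⟩
  have y_low {d : ℕ} (hd : d ≤ m) : coeff (Finsupp.single 1 d) f = 0 := by
    rcases hd.eq_or_lt with rfl | hd
    · simpa [x_low] using coeff_add_coeff_eq_zero_of_mem_qHarmonic hm hf
    rcases eq_or_ne d 0 with rfl | hd₀
    · simpa using x_low hd.le
    · have h_not_le : ¬ 2 * m - d ≤ m := by lia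
      have h_sub : 2 * m - (2 * m - d) = d := by lia
      simpa only [dihedralExponent, if_neg h_not_le, h_sub] using h ⟨2 * m - d, by lia⟩
  ext e
  rcases ne_zero_and_ne_zero_or_eq_single e with ⟨h₀, h₁⟩ | ⟨i, d, rfl⟩
  · exact (pderiv_pderiv_eq_zero_iff zero_ne_one f).1 (mem_qHarmonic.1 hf).2.2 e h₀ h₁
  · rcases lt_or_ge m d with hd | hd
    · exact coeff_single_eq_zero_of_mem_qHarmonic hm hq hf i hd
    · fin_cases i
      exacts [x_low hd, y_low hd]

theorem dihedralFamily_dualBases (hm : m ≠ 0)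
    (hq : ∀ b : ℕ, 1 ≤ b → b ≤ m → 1 + q * (b : K) ≠ 0) :
    Module.DualBases
      (fun i ↦ (⟨dihedralFamily K m i, dihedralFamily_mem_qHarmonic i⟩ : qHarmonic q m))
      (fun i ↦ lcoeff K (dihedralExponent m i) ∘ₗ (qHarmonic q m).subtype) where
  eval_same i := by simp [coeff_dihedralExponent_dihedralFamily]
  eval_of_ne i j hij := by simp [coeff_dihedralExponent_dihedralFamily, hij]
  total {f g} h := by
    refine Subtype.ext (sub_eq_zero.1 (eq_zero_of_coeff_dihedralExponent_eq_zero hm hq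
      (sub_mem f.2 g.2) fun i ↦ ?_))
    simpa [sub_eq_zero] using h i

/-- The family `dihedralFamily K m` as a basis of `qHarmonic q m`. -/
noncomputable def dihedralBasis (hm : m ≠ 0)
    (hq : ∀ b : ℕ, 1 ≤ b → b ≤ m → 1 + q * (b : K) ≠ 0) :
    Module.Basis (Fin (2 * m)) K (qHarmonic q m) :=
  (dihedralFamily_dualBases hm hq).basis

theorem subtype_comp_dihedralBasis (hm : m ≠ 0)
    (hq : ∀ b : ℕ, 1 ≤ b → b ≤ m → 1 + q * (b : K) ≠ 0) :
    (qHarmonic q m).subtype ∘ dihedralBasis hm hq = dihedralFamily K m := by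
  rw [dihedralBasis, Module.DualBases.coe_basis]
  rfl

end Dihedral

/-- For `q` not of the form `-1/b` with `1 ≤ b ≤ m`, the `2m` polynomials
`1, x, …, x^{m-1}, x^m - y^m, y^{m-1}, …, y` form a basis of the `q`-harmonic
polynomials for the dihedral group `G(m,m,2)`; in particular that space has
dimension `2m`. -/
theorem basis_qHarmonic_dihedral {K : Type*} [Field K] [CharZero K] (q : K)
    (m : ℕ) (hm : 1 ≤ m) (hq : ∀ b : ℕ, 1 ≤ b → b ≤ m → 1 + q * (b : K) ≠ 0) :
    LinearIndependent K (fun i : Fin (2 * m) =>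
      if (i : ℕ) < m then (X 0 : MvPolynomial (Fin 2) K) ^ (i : ℕ)
      else if (i : ℕ) = m then (X 0 : MvPolynomial (Fin 2) K) ^ m - X 1 ^ m
      else (X 1 : MvPolynomial (Fin 2) K) ^ (2 * m - (i : ℕ)))
    ∧ Submodule.span K (Set.range (fun i : Fin (2 * m) =>
        if (i : ℕ) < m then (X 0 : MvPolynomial (Fin 2) K) ^ (i : ℕ)
        else if (i : ℕ) = m then (X 0 : MvPolynomial (Fin 2) K) ^ m - X 1 ^ m
        else (X 1 : MvPolynomial (Fin 2) K) ^ (2 * m - (i : ℕ))))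
      = LinearMap.ker (D2 q m) ⊓ LinearMap.ker (D2 q (2 * m)) ⊓
          LinearMap.ker ((pderiv 0).toLinearMap * (pderiv 1).toLinearMap :
            Module.End K (MvPolynomial (Fin 2) K))
    ∧ Module.finrank K
        ↥(LinearMap.ker (D2 q m) ⊓ LinearMap.ker (D2 q (2 * m)) ⊓
            LinearMap.ker ((pderiv 0).toLinearMap * (pderiv 1).toLinearMap :
              Module.End K (MvPolynomial (Fin 2) K)))
        = 2 * m := by
  change LinearIndependent K (dihedralFamily K m) ∧
    Submodule.span K (Set.range (dihedralFamily K m)) = qHarmonic q m ∧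
      Module.finrank K (qHarmonic q m) = 2 * m
  have hm₀ : m ≠ 0 := Nat.one_le_iff_ne_zero.1 hm
  let b := dihedralBasis hm₀ hq
  rw [← subtype_comp_dihedralBasis hm₀ hq]
  refine ⟨b.linearIndependent.map' _ (qHarmonic q m).ker_subtype, ?_, ?_⟩
  · rw [Set.range_comp, ← Submodule.map_span, b.span_eq, Submodule.map_subtype_top]
  · rw [Module.finrank_eq_card_basis b, Fintype.card_fin]
end

section
/- Let m ≥ 1 and let α, β be integers with 0 ≤ α < m and 0 ≤ β < m. Then the binomial B_{α,β} := ⟨β+m⟩_m · x^{α+m} y^β − ⟨α+m⟩_m · x^α y^{β+m} satisfies D_{q,m} B_{α,β} = 0 and D_{q,2m} B_{α,β} = 0 (for any q ∈ K). -/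
/-!
Each summand of `D_{q,k}` lowers the exponent of its own variable by `k`: it sends `x^d p` to
`⟨d⟩_k x^{d-k} p` when `p` is free of `x`, because `x∂_x` has eigenvalue `d - k` on `x^{d-k} p`.
As `⟨d⟩_k = 0` for `d < k`, for `k = m` each monomial of the binomial is reduced in one variable
only, both land on a multiple of `x^α y^β`, and the coefficients are chosen to cancel. For
`k ≥ 2m` every exponent is below `k`, so each monomial is killed separately.
-/

open MvPolynomial

section Derivation

variable {R A : Type*} [CommSemiring R] [CommSemiring A] [Algebra R A]
  {D : Derivation R A A} {x p : A}

theorem derivation_apply_pow_mul (hx : D x = 1) (hp : D p = 0) (d : ℕ) :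
    D (x ^ d * p) = d • (x ^ (d - 1) * p) := by
  simp only [Derivation.leibniz, Derivation.leibniz_pow, hx, hp, smul_eq_mul, nsmul_eq_mul]
  ring

theorem mul_derivation_apply_pow_mul (hx : D x = 1) (hp : D p = 0) (d : ℕ) :
    x * D (x ^ d * p) = d • (x ^ d * p) := by
  rw [derivation_apply_pow_mul hx hp]
  cases d with
  | zero => simp only [zero_smul, mul_zero]
  | succ d => rw [Nat.add_sub_cancel, mul_smul_comm, ← mul_assoc, ← pow_succ']

theorem derivation_pow_apply_pow_mul (hx : D x = 1) (hp : D p = 0) (d k : ℕ) :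
    ((D : Module.End R A) ^ k) (x ^ d * p) = d.descFactorial k • (x ^ (d - k) * p) := by
  induction k with
  | zero => simp
  | succ k ih =>
    rw [pow_succ', Module.End.mul_apply, ih, map_nsmul, Derivation.coeFn_coe,
      derivation_apply_pow_mul hx hp, smul_smul, Nat.sub_sub, Nat.descFactorial_succ, mul_comm]

theorem one_add_smul_euler_mul_derivation_pow_apply (hx : D x = 1) (hp : D p = 0) (q : R)
    (d k : ℕ) :
    ((1 + q • (LinearMap.mulLeft R x * D.toLinearMap)) * (D : Module.End R A) ^ k) (x ^ d * p)
      = (d.descFactorial k * (1 + q * (d - k : ℕ))) • (x ^ (d - k) * p) := by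
  have euler : (1 + q • (LinearMap.mulLeft R x * D.toLinearMap)) (x ^ (d - k) * p)
      = (1 + q * (d - k : ℕ)) • (x ^ (d - k) * p) := by
    rw [LinearMap.add_apply, LinearMap.smul_apply, Module.End.mul_apply, Module.End.one_apply,
      LinearMap.mulLeft_apply, Derivation.coeFn_coe, mul_derivation_apply_pow_mul hx hp, add_smul,
      one_smul, mul_smul, Nat.cast_smul_eq_nsmul]
  rw [Module.End.mul_apply, derivation_pow_apply_pow_mul hx hp, map_nsmul, euler, mul_smul,
    Nat.cast_smul_eq_nsmul]

end Derivation

theorem pderiv_X_pow_of_ne {σ R : Type*} [CommSemiring R] {i j : σ} (h : j ≠ i) (n : ℕ) :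
    pderiv i ((X j : MvPolynomial σ R) ^ n) = 0 := by
  rw [pderiv_pow, pderiv_X_of_ne h, mul_zero]

section DeformedOperator

variable {K : Type*} [Field K] (q : K)

theorem tp_eq_descFactorial_mul (d k : ℕ) :
    tp q d k = d.descFactorial k * (1 + q * (d - k : ℕ)) := by
  rw [tp, ← descPochhammer_eval_eq_prod_range, descPochhammer_eval_eq_descFactorial]
  obtain hkd | hdk := le_or_gt k d
  · rw [Nat.cast_sub hkd]
  · rw [Nat.descFactorial_of_lt hdk, Nat.cast_zero, zero_mul, zero_mul]

theorem tp_eq_zero_of_lt {d k : ℕ} (h : d < k) : tp q d k = 0 := by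
  rw [tp_eq_descFactorial_mul, Nat.descFactorial_of_lt h, Nat.cast_zero, zero_mul]

theorem D2_X_pow_mul_X_pow (k a b : ℕ) :
    D2 q k (X 0 ^ a * X 1 ^ b)
      = tp q a k • (X 0 ^ (a - k) * X 1 ^ b) + tp q b k • (X 0 ^ a * X 1 ^ (b - k)) := by
  rw [D2, LinearMap.add_apply, tp_eq_descFactorial_mul, tp_eq_descFactorial_mul,
    one_add_smul_euler_mul_derivation_pow_apply (pderiv_X_self 0)
      (pderiv_X_pow_of_ne one_ne_zero b),
    mul_comm (X 0 ^ a), mul_comm (X 0 ^ a),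
    one_add_smul_euler_mul_derivation_pow_apply (pderiv_X_self 1)
      (pderiv_X_pow_of_ne zero_ne_one a)]

theorem D2_X_pow_mul_X_pow_eq_zero {k a b : ℕ} (ha : a < k) (hb : b < k) :
    D2 q k (X 0 ^ a * X 1 ^ b) = 0 := by
  rw [D2_X_pow_mul_X_pow, tp_eq_zero_of_lt q ha, tp_eq_zero_of_lt q hb, zero_smul, zero_smul,
    add_zero]

theorem D2_X_pow_add_mul_X_pow {m b : ℕ} (a : ℕ) (hb : b < m) :
    D2 q m (X 0 ^ (a + m) * X 1 ^ b) = tp q (a + m) m • (X 0 ^ a * X 1 ^ b) := by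
  rw [D2_X_pow_mul_X_pow, tp_eq_zero_of_lt q hb, zero_smul, add_zero, Nat.add_sub_cancel]

theorem D2_X_pow_mul_X_pow_add {m a : ℕ} (ha : a < m) (b : ℕ) :
    D2 q m (X 0 ^ a * X 1 ^ (b + m)) = tp q (b + m) m • (X 0 ^ a * X 1 ^ b) := by
  rw [D2_X_pow_mul_X_pow, tp_eq_zero_of_lt q ha, zero_smul, zero_add, Nat.add_sub_cancel]

end DeformedOperator

theorem binomial_qHarmonic_general {K : Type*} [Field K] (q : K) {m α β : ℕ}
    (hα : α < m) (hβ : β < m) {k : ℕ} (hk : k = m ∨ 2 * m ≤ k) :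
    D2 q k (tp q (β + m) m • (X 0 ^ (α + m) * X 1 ^ β)
        - tp q (α + m) m • (X 0 ^ α * X 1 ^ (β + m))) = 0 := by
  rw [map_sub, map_smul, map_smul]
  obtain rfl | hk := hk
  · rw [D2_X_pow_add_mul_X_pow q α hβ, D2_X_pow_mul_X_pow_add q hα β, smul_comm, sub_self]
  · rw [D2_X_pow_mul_X_pow_eq_zero q (by omega) (by omega),
      D2_X_pow_mul_X_pow_eq_zero q (by omega) (by omega), smul_zero, smul_zero, sub_zero]

/-- For `0 ≤ α, β < m`, the binomial
`B = ⟨β+m⟩_m x^{α+m} y^β − ⟨α+m⟩_m x^α y^{β+m}` is killed by `D_{q,m}` and `D_{q,2m}`. -/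
theorem binomial_qHarmonic {K : Type*} [Field K] [CharZero K] (q : K)
    (m α β : ℕ) (hm : 1 ≤ m) (hα : α < m) (hβ : β < m) :
    D2 q m (tp q (β + m) m • ((X 0 : MvPolynomial (Fin 2) K) ^ (α + m) * X 1 ^ β)
        - tp q (α + m) m • ((X 0 : MvPolynomial (Fin 2) K) ^ α * X 1 ^ (β + m))) = 0
    ∧ D2 q (2 * m) (tp q (β + m) m • ((X 0 : MvPolynomial (Fin 2) K) ^ (α + m) * X 1 ^ β)
        - tp q (α + m) m • ((X 0 : MvPolynomial (Fin 2) K) ^ α * X 1 ^ (β + m))) = 0 :=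
  ⟨binomial_qHarmonic_general q hα hβ (.inl rfl), binomial_qHarmonic_general q hα hβ (.inr le_rfl)⟩
end
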